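/- There is an absolute constant c₀ > 0 with the following property. Let ε > 0 and let q ∈ ℕ be sufficiently large in terms of ε, and let y ≥ q^{ε/2}. Let h₀ : ℕ → ℝ be a multiplicative function such that h₀(p) ≠ 0 for every prime p ∤ q. Then: (1) #{n ≤ y : n square-free, gcd(n,q) = 1, h₀(n) > 0} ≥ c₀ · (φ(q)/q) · y; and (2) #{n ≤ y : n square-free, gcd(n,q) = 1, h₀(n) < 0} ≥ c₀ · (φ(q)/q) · y · min{1, ∑_{p prime, p ≤ y/q^{ε/8}, p ∤ q, h₀(p) < 0} 1/p}. Here φ is Euler's totient function. -/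

import Mathlib

/-!
Only the sign of `h₀` at squarefree integers coprime to `q` matters. Write `f` for that sign.

**Positive values.** The convolution `1 * f` is nonnegative, being a product of factors `1 + f p` over
primes, so `∑_{n ≤ x} f n / n` is at least `-36 φ(q)/q`, by
`sign_logSum_lower` and the upper bound for the number of terms. Hence the integers `b ≤ A` with `h₀ b > 0` carry at least a fixed proportion of
the logarithmic mass `(φ(q)/q) log A` (`pos_logSum_lower`), where `A = y^(1/8)`; those with
`b ≤ y^(1/1536)` are discarded, so that the sieve bounds apply at every scale below. To pass from this
logarithmic density to a count up to `y`, take three such integers `b₁, b₂, b₃` and three distinct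
primes `p, r, s` larger than `A`. The product of `h₀ (b₃ p r)`, `h₀ (b₂ p s)`, `h₀ (b₁ r s)` equals
`h₀ b₁ h₀ b₂ h₀ b₃` times a square, so one of these values is positive (`sign_triple`). The primes are
taken at scales `√(y b₁ / (b₂ b₃))` and its analogues, chosen so that `b₃ p r`, `b₂ p s` and
`b₁ r s` are all of size at most `y`, within a constant factor of it. Averaging over all triples
(`triple_ineq`, `sum_pairSum_le`) gives
`≫ (φ(q)/q) y` representations `c p r ≤ y` with `h₀ (c p r) > 0`, and an integer has at most four
of them (`card_reps_le`). The result is `pos_count`.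

The sieve input is elementary: upper and lower bounds of the right order for the number and the
logarithmic sum of squarefree integers coprime to `q`, from factorizations `n = d m` with `d ∣ q` and
`m` coprime to `q`, and Chebyshev-type bounds for primes. They are
uniform beyond a small power of `q` because `2^ω(q)` is smaller than any power of `q`; the structure
`Reg` collects them.

**Negative values.** For a prime `p ∤ q` with `h₀ p < 0`, multiplication by `p` maps integers
`k ≤ y / p` with `p ∤ k` and `h₀ k > 0` to integers `n ≤ y` with `h₀ n < 0`. The number of such primes
dividing `n` therefore has a large first moment over the `n` with `h₀ n < 0` (`first_moment`). For primes
below `y^(1/4)` the second moment is controlled by counting multiples, and Cauchy–Schwarz concludes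
(`neg_small`); an integer `n ≤ y` has at most four prime factors beyond `y^(1/4)` (`neg_large`).
-/

open scoped BigOperators Classical

noncomputable section

/-- `h` is a multiplicative arithmetic function. -/
def IsMultFn (h : ℕ → ℝ) : Prop :=
  h 1 = 1 ∧ ∀ m n : ℕ, Nat.Coprime m n → h (m * n) = h m * h n

/-! ### Squarefree integers coprime to `q` -/

namespace MultSigns

open Finset Real

/-- The squarefree integers `n ≤ x` that are coprime to `q`. -/
def sfc (q : ℕ) (x : ℝ) : Finset ℕ :=
  (range (⌊x⌋₊ + 1)).filter (fun n : ℕ => Squarefree n ∧ Nat.Coprime n q)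

/-- The logarithmic sum `∑ 1/n` over the squarefree `n ≤ x` coprime to `q`. -/
def logSum (q : ℕ) (x : ℝ) : ℝ := ∑ n ∈ sfc q x, 1 / (n : ℝ)

/-- The density `φ(q)/q` of the integers coprime to `q`. -/
def dens (q : ℕ) : ℝ := (Nat.totient q : ℝ) / (q : ℝ)

/-- The sum `∑ 1/d` over the squarefree divisors `d` of `q`, equal to `∏_{p ∣ q} (1 + 1/p)`. -/
def sfDivSum (q : ℕ) : ℝ := ∑ d ∈ q.divisors.filter Squarefree, 1 / (d : ℝ)

lemma mem_sfc {q : ℕ} {x : ℝ} (hx : 0 ≤ x) {n : ℕ} :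
    n ∈ sfc q x ↔ (n : ℝ) ≤ x ∧ Squarefree n ∧ Nat.Coprime n q := by
  simp only [sfc, mem_filter, mem_range, Nat.lt_succ_iff, Nat.le_floor_iff hx]

lemma pos_of_mem_sfc {q : ℕ} {x : ℝ} {n : ℕ} (h : n ∈ sfc q x) : 0 < n := by
  simp only [sfc, mem_filter] at h
  exact Nat.pos_of_ne_zero h.2.1.ne_zero

lemma logSum_nonneg (q : ℕ) (x : ℝ) : 0 ≤ logSum q x :=
  sum_nonneg fun _ _ => by positivity

lemma sum_le_sum_inj {α β : Type*} {s : Finset α} {t : Finset β} (i : α → β)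
    (hi : ∀ a ∈ s, i a ∈ t) (inj : Set.InjOn i s) {f : α → ℝ} {g : β → ℝ}
    (h : ∀ a ∈ s, f a ≤ g (i a)) (hg : ∀ b ∈ t, 0 ≤ g b) :
    ∑ a ∈ s, f a ≤ ∑ b ∈ t, g b := by
  calc ∑ a ∈ s, f a ≤ ∑ a ∈ s, g (i a) := sum_le_sum h
    _ = ∑ b ∈ s.image i, g b := (sum_image inj).symm
    _ ≤ ∑ b ∈ t, g b :=
      sum_le_sum_of_subset_of_nonneg (image_subset_iff.2 hi) fun b hb _ => hg b hb

lemma sum_sqfree_divisors {n : ℕ} (hn : n ≠ 0) (f : ℕ → ℝ) :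
    ∑ d ∈ n.divisors.filter Squarefree, f d =
      ∑ t ∈ n.primeFactors.powerset, f (∏ p ∈ t, p) := by
  have h1 := Nat.sum_divisors_filter_squarefree hn (f := f)
  have h2 : (UniqueFactorizationMonoid.normalizedFactors n).toFinset = n.primeFactors := by
    ext p
    simp [Nat.factors_eq]
  rw [h2] at h1
  rw [h1]
  refine sum_congr rfl fun t _ => ?_
  rw [prod_val]
  rfl

lemma sfDivSum_eq_prod {q : ℕ} (hq : q ≠ 0) :
    sfDivSum q = ∏ p ∈ q.primeFactors, (1 + 1 / (p : ℝ)) := by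
  rw [sfDivSum, sum_sqfree_divisors hq, prod_one_add]
  refine sum_congr rfl fun t _ => ?_
  push_cast
  simp

lemma card_sqfree_divisors {q : ℕ} (hq : q ≠ 0) :
    ((q.divisors.filter Squarefree).card : ℝ) = 2 ^ q.primeFactors.card := by
  have := sum_sqfree_divisors hq (fun _ => 1)
  simpa using this

lemma dens_eq_prod {q : ℕ} (hq : q ≠ 0) :
    dens q = ∏ p ∈ q.primeFactors, (1 - 1 / (p : ℝ)) := by
  have h := Nat.totient_eq_mul_prod_factors q
  have h2 : ((q.totient : ℚ) : ℝ) = ((q * ∏ p ∈ q.primeFactors, (1 - (p : ℚ)⁻¹) : ℚ) : ℝ) := by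
    rw [h]
  push_cast at h2
  rw [dens, h2, mul_div_cancel_left₀ _ (by positivity)]
  simp

lemma dens_pos {q : ℕ} (hq : q ≠ 0) : 0 < dens q := by
  have : 0 < q.totient := Nat.totient_pos.2 (Nat.pos_of_ne_zero hq)
  unfold dens
  positivity

lemma dens_le_one (q : ℕ) : dens q ≤ 1 :=
  div_le_one_of_le₀ (by exact_mod_cast Nat.totient_le q) (by positivity)

/-- Telescoping: `∏_{k=2}^{N} (1 - 1/k²) = (N+1)/(2N)` for `N ≥ 1`. -/
lemma half_le_prod_Icc (N : ℕ) : (1 / 2 : ℝ) ≤ ∏ k ∈ Icc 2 N, (1 - 1 / (k : ℝ) ^ 2) := by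
  rcases Nat.lt_or_ge N 2 with h | h
  · rw [Icc_eq_empty (by omega)]; norm_num
  have key : ∏ k ∈ Icc 2 N, (1 - 1 / (k : ℝ) ^ 2) = ((N : ℝ) + 1) / (2 * N) := by
    induction N, h using Nat.le_induction with
    | base => norm_num
    | succ n hn ih =>
      rw [← insert_Icc_right_eq_Icc_add_one (by omega), prod_insert (by simp), ih]
      have : (0 : ℝ) < n := by positivity
      push_cast
      field_simp
      ring
  rw [key, div_le_div_iff₀ (by norm_num) (by positivity)]
  linarith

lemma half_le_prod_primes (s : Finset ℕ) (hs : ∀ p ∈ s, 2 ≤ p) :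
    (1 / 2 : ℝ) ≤ ∏ k ∈ s, (1 - 1 / (k : ℝ) ^ 2) := by
  refine (half_le_prod_Icc (s.sup id)).trans ?_
  refine prod_le_prod_of_subset_of_le_one ?_ ?_ ?_
  · intro p hp
    exact mem_Icc.2 ⟨hs p hp, le_sup (f := id) hp⟩
  · intro k hk
    have : (1 : ℝ) ≤ (k : ℝ) := by exact_mod_cast (by have := (mem_Icc.1 hk).1; omega)
    rw [sub_nonneg]
    exact div_le_one_of_le₀ (one_le_pow₀ this) (by positivity)
  · intro k _ _
    have : (0 : ℝ) ≤ 1 / (k : ℝ) ^ 2 := by positivity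
    linarith

/-- The product is `∏_{p ∣ q} (1 - 1/p²)`. -/
lemma sfDivSum_mul_dens {q : ℕ} (hq : q ≠ 0) :
    1 / 2 ≤ sfDivSum q * dens q ∧ sfDivSum q * dens q ≤ 1 := by
  have h : sfDivSum q * dens q = ∏ p ∈ q.primeFactors, (1 - 1 / (p : ℝ) ^ 2) := by
    rw [sfDivSum_eq_prod hq, dens_eq_prod hq, ← prod_mul_distrib]
    refine prod_congr rfl fun p _ => by ring
  rw [h]
  refine ⟨half_le_prod_primes _ fun p hp => (Nat.prime_of_mem_primeFactors hp).two_le, ?_⟩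
  refine prod_le_one ?_ ?_
  · intro k hk
    have : (1 : ℝ) ≤ (k : ℝ) := by exact_mod_cast (Nat.prime_of_mem_primeFactors hk).one_le
    rw [sub_nonneg]
    exact div_le_one_of_le₀ (one_le_pow₀ this) (by positivity)
  · intro k _
    have : (0 : ℝ) ≤ 1 / (k : ℝ) ^ 2 := by positivity
    linarith

lemma log_le_sum_inv {x : ℝ} (hx : 1 ≤ x) : log x ≤ ∑ n ∈ Icc 1 ⌊x⌋₊, 1 / (n : ℝ) := by
  have h := log_le_harmonic_floor x (by linarith)
  rw [harmonic_eq_sum_Icc] at h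
  push_cast at h
  simpa using h

lemma sum_inv_le {x : ℝ} (hx : 1 ≤ x) : ∑ n ∈ Icc 1 ⌊x⌋₊, 1 / (n : ℝ) ≤ 1 + log x := by
  have h := harmonic_floor_le_one_add_log x hx
  rw [harmonic_eq_sum_Icc] at h
  push_cast at h
  simpa using h

lemma sum_inv_sq_le (N : ℕ) : ∑ n ∈ Icc 1 N, 1 / (n : ℝ) ^ 2 ≤ 2 := by
  rcases Nat.eq_zero_or_pos N with h | h
  · simp [h]
  rw [← Ioc_insert_left h, sum_insert (by simp)]
  have h2 := sum_Ioc_inv_sq_le_sub (α := ℝ) (k := 1) one_ne_zero h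
  have h3 : ∑ n ∈ Ioc 1 N, 1 / (n : ℝ) ^ 2 = ∑ n ∈ Ioc 1 N, ((n : ℝ) ^ 2)⁻¹ := by simp
  have : (0 : ℝ) ≤ (N : ℝ)⁻¹ := by positivity
  rw [h3]
  push_cast at h2 ⊢
  norm_num at h2 ⊢
  linarith

/-- Every `n` is a squarefree number times a square, so the squarefree numbers carry at least
`(∑ 1/k²)⁻¹ ≥ 1/2` of the harmonic sum. -/
lemma log_le_sqfree {x : ℝ} (hx : 1 ≤ x) :
    log x / 2 ≤ ∑ n ∈ (Icc 1 ⌊x⌋₊).filter Squarefree, 1 / (n : ℝ) := by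
  choose a b hab hsq using Nat.sq_mul_squarefree
  have key : ∑ n ∈ Icc 1 ⌊x⌋₊, 1 / (n : ℝ) ≤
      ∑ z ∈ (Icc 1 ⌊x⌋₊).filter Squarefree ×ˢ Icc 1 ⌊x⌋₊,
        1 / (z.1 : ℝ) * (1 / (z.2 : ℝ) ^ 2) := by
    refine sum_le_sum_inj (fun n => (a n, b n)) ?_ ?_ ?_ ?_
    · intro n hn
      rw [mem_Icc] at hn
      have h1 := hab n
      have ha : 0 < a n := Nat.pos_of_ne_zero (hsq n).ne_zero
      have hb : 0 < b n := by
        rcases Nat.eq_zero_or_pos (b n) with h | h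
        · rw [h] at h1; simp at h1; omega
        · exact h
      have h2 : a n ≤ n := Nat.le_of_dvd hn.1 (Dvd.intro_left _ h1)
      have h3 : b n ≤ n := Nat.le_of_dvd hn.1 ((dvd_pow_self _ two_ne_zero).trans (Dvd.intro _ h1))
      simp only [mem_product, mem_filter, mem_Icc]
      exact ⟨⟨⟨ha, h2.trans hn.2⟩, hsq n⟩, hb, h3.trans hn.2⟩
    · intro n _ m _ h
      simp only [Prod.mk.injEq] at h
      rw [← hab n, ← hab m, h.1, h.2]
    · intro n _
      have h1 : (n : ℝ) = (b n : ℝ) ^ 2 * a n := by exact_mod_cast (hab n).symm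
      refine le_of_eq ?_
      simp only
      rw [one_div_mul_one_div, mul_comm (a n : ℝ), ← h1]
    · intro z _
      positivity
  rw [sum_product] at key
  simp only [← mul_sum] at key
  rw [← sum_mul] at key
  have h1 := log_le_sum_inv hx
  have h2 := sum_inv_sq_le ⌊x⌋₊
  have h3 : 0 ≤ ∑ n ∈ (Icc 1 ⌊x⌋₊).filter Squarefree, 1 / (n : ℝ) :=
    sum_nonneg fun _ _ => by positivity
  nlinarith

lemma sfDivSum_pos {q : ℕ} (hq : q ≠ 0) : 0 < sfDivSum q := by
  have := (sfDivSum_mul_dens hq).1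
  have h2 := dens_pos hq
  by_contra h
  nlinarith

/-- Lower bound for the logarithmic sum: a squarefree `n` splits as `gcd(n,q)` times a number
coprime to `q`. -/
lemma logSum_lower {q : ℕ} (hq : q ≠ 0) {x : ℝ} (hx : 1 ≤ x) :
    dens q * log x / 2 ≤ logSum q x := by
  have hx0 : 0 ≤ x := by linarith
  have key : ∑ n ∈ (Icc 1 ⌊x⌋₊).filter Squarefree, 1 / (n : ℝ) ≤
      ∑ z ∈ (q.divisors.filter Squarefree) ×ˢ sfc q x, 1 / (z.1 : ℝ) * (1 / (z.2 : ℝ)) := by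
    refine sum_le_sum_inj (fun n => (n.gcd q, n / n.gcd q)) ?_ ?_ ?_ ?_
    · intro n hn
      simp only [mem_filter, mem_Icc, Nat.le_floor_iff hx0] at hn
      obtain ⟨⟨h1, h2⟩, h3⟩ := hn
      have h4 : n.gcd q * (n / n.gcd q) = n := Nat.mul_div_cancel' (Nat.gcd_dvd_left _ _)
      have h5 : Squarefree (n.gcd q * (n / n.gcd q)) := by rwa [h4]
      rw [Nat.squarefree_mul_iff] at h5
      have h6 : Nat.Coprime (n / n.gcd q) q := by
        have h7 : (n / n.gcd q).gcd q ∣ n.gcd q :=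
          Nat.dvd_gcd ((Nat.gcd_dvd_left _ _).trans (Nat.div_dvd_of_dvd (Nat.gcd_dvd_left _ _)))
            (Nat.gcd_dvd_right _ _)
        have h8 : (n / n.gcd q).gcd q ∣ n / n.gcd q := Nat.gcd_dvd_left _ _
        exact Nat.eq_one_of_dvd_coprimes h5.1 h7 h8
      simp only [mem_product, mem_filter, Nat.mem_divisors, mem_sfc hx0]
      refine ⟨⟨⟨Nat.gcd_dvd_right _ _, hq⟩, h5.2.1⟩, ?_, h5.2.2, h6⟩
      exact le_trans (by exact_mod_cast Nat.div_le_self _ _) h2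
    · intro n _ m _ h
      simp only [Prod.mk.injEq] at h
      rw [← Nat.mul_div_cancel' (Nat.gcd_dvd_left n q), ← Nat.mul_div_cancel' (Nat.gcd_dvd_left m q),
        h.2, h.1]
    · intro n _
      refine le_of_eq ?_
      rw [one_div_mul_one_div]
      congr 1
      exact_mod_cast (Nat.mul_div_cancel' (Nat.gcd_dvd_left n q)).symm
    · intro z _
      positivity
  rw [sum_product] at key
  simp only [← mul_sum] at key
  rw [← sum_mul] at key
  have h1 := log_le_sqfree hx
  have h2 : log x / 2 ≤ sfDivSum q * logSum q x := h1.trans key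
  have h3 := (sfDivSum_mul_dens hq).2
  have h4 := logSum_nonneg q x
  have h5 := dens_pos hq
  calc dens q * log x / 2 = dens q * (log x / 2) := by ring
    _ ≤ dens q * (sfDivSum q * logSum q x) := by gcongr
    _ = (sfDivSum q * dens q) * logSum q x := by ring
    _ ≤ 1 * logSum q x := by gcongr
    _ = _ := one_mul _

/-- Upper bound for the logarithmic sum: the products `d m` with `d ∣ q` squarefree and `m`
coprime to `q` are distinct, and the divisors `d > x` contribute at most `2^{ω(q)}/x` to
`∑ 1/d`. -/
lemma logSum_upper {q : ℕ} (hq : q ≠ 0) {x : ℝ} (hx : 1 ≤ x)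
    (hw : (2 : ℝ) ^ q.primeFactors.card ≤ x / 4) :
    logSum q x ≤ 4 * dens q * (1 + 2 * log x) := by
  have hx0 : 0 ≤ x := by linarith
  set E := q.divisors.filter Squarefree with hE
  have key : ∑ z ∈ (E.filter (fun d : ℕ => (d : ℝ) ≤ x)) ×ˢ sfc q x,
      1 / (z.1 : ℝ) * (1 / (z.2 : ℝ)) ≤ ∑ n ∈ Icc 1 ⌊x ^ 2⌋₊, 1 / (n : ℝ) := by
    refine sum_le_sum_inj (fun z => z.1 * z.2) ?_ ?_ ?_ ?_
    · rintro ⟨d, m⟩ h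
      simp only [hE, mem_product, mem_filter, Nat.mem_divisors, mem_sfc hx0] at h
      obtain ⟨⟨⟨_, h1⟩, h2⟩, h3, h4, _⟩ := h
      have := Nat.pos_of_ne_zero h1.ne_zero
      have := Nat.pos_of_ne_zero h4.ne_zero
      rw [mem_Icc, Nat.le_floor_iff (by positivity)]
      refine ⟨Nat.mul_pos (by assumption) (by assumption), ?_⟩
      push_cast
      rw [sq]
      gcongr
    · rintro ⟨d, m⟩ h ⟨d', m'⟩ h' heq
      simp only [hE, coe_product, Set.mem_prod, mem_coe, mem_filter, Nat.mem_divisors,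
        mem_sfc hx0] at h h' heq
      obtain ⟨⟨⟨⟨h0, _⟩, h1⟩, h2⟩, h3, h4, h5⟩ := h
      obtain ⟨⟨⟨⟨h0', _⟩, h1'⟩, h2'⟩, h3', h4', h5'⟩ := h'
      have e1 : (d * m).gcd q = d := by
        rw [Nat.Coprime.gcd_mul_right_cancel d h5]
        exact Nat.gcd_eq_left h0
      have e2 : (d' * m').gcd q = d' := by
        rw [Nat.Coprime.gcd_mul_right_cancel d' h5']
        exact Nat.gcd_eq_left h0'
      have e3 : d = d' := by rw [← e1, ← e2, heq]
      subst e3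
      rw [Nat.eq_of_mul_eq_mul_left (Nat.pos_of_ne_zero h1.ne_zero) heq]
    · rintro ⟨d, m⟩ _
      refine le_of_eq ?_
      simp only
      push_cast
      rw [one_div_mul_one_div]
    · intro n _
      positivity
  rw [sum_product] at key
  simp only [← mul_sum] at key
  rw [← sum_mul] at key
  have h1 : ∑ n ∈ Icc 1 ⌊x ^ 2⌋₊, 1 / (n : ℝ) ≤ 1 + 2 * log x := by
    refine (sum_inv_le (one_le_pow₀ hx)).trans ?_
    rw [log_pow]; norm_num
  have h2 : sfDivSum q ≤ ∑ d ∈ E.filter (fun d : ℕ => (d : ℝ) ≤ x), 1 / (d : ℝ) + 1 / 4 := by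
    rw [sfDivSum, ← hE, ← sum_filter_add_sum_filter_not E (fun d : ℕ => (d : ℝ) ≤ x)]
    gcongr
    calc ∑ d ∈ E.filter (fun d : ℕ => ¬ (d : ℝ) ≤ x), 1 / (d : ℝ)
        ≤ ∑ d ∈ E.filter (fun d : ℕ => ¬ (d : ℝ) ≤ x), 1 / x := by
          refine sum_le_sum fun d hd => ?_
          have := (mem_filter.1 hd).2
          gcongr
          linarith
      _ ≤ ∑ d ∈ E, 1 / x :=
          sum_le_sum_of_subset_of_nonneg (filter_subset _ _) fun _ _ _ => by positivity
      _ = 2 ^ q.primeFactors.card * (1 / x) := by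
          rw [sum_const, nsmul_eq_mul, card_sqfree_divisors hq]
      _ ≤ x / 4 * (1 / x) := by gcongr
      _ = 1 / 4 := by field_simp
  have h3 := (sfDivSum_mul_dens hq).1
  have h4 := dens_pos hq
  have h5 := dens_le_one q
  have h6 := logSum_nonneg q x
  set T := ∑ d ∈ E.filter (fun d : ℕ => (d : ℝ) ≤ x), 1 / (d : ℝ) with hS1
  have h7 : 1 / 4 ≤ dens q * T := by nlinarith
  have h8 : T * logSum q x ≤ 1 + 2 * log x := key.trans h1
  calc logSum q x = 4 * (1 / 4 * logSum q x) := by ring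
    _ ≤ 4 * (dens q * T * logSum q x) := by gcongr
    _ = 4 * dens q * (T * logSum q x) := by ring
    _ ≤ _ := by gcongr

/-- Upper bound for the count, from `∑ log n = ∑_{mp ≤ x} log p`, Chebyshev's upper bound for
`θ` and `log (x/n) ≤ x/n`. -/
lemma card_sfc_mul_log {q : ℕ} {x : ℝ} (hx : 1 ≤ x) :
    ((sfc q x).card : ℝ) * log x ≤ (1 + log 4) * x * logSum q x := by
  have hx0 : 0 ≤ x := by linarith
  have e1 : ((sfc q x).card : ℝ) * log x =
      ∑ n ∈ sfc q x, log n + ∑ n ∈ sfc q x, log (x / n) := by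
    rw [← sum_add_distrib, ← nsmul_eq_mul, ← sum_const]
    refine sum_congr rfl fun n hn => ?_
    have : (0 : ℝ) < n := by exact_mod_cast pos_of_mem_sfc hn
    rw [log_div (by linarith) (by linarith)]
    ring
  have e2 : ∑ n ∈ sfc q x, log (x / n) ≤ x * logSum q x := by
    rw [logSum, mul_sum]
    refine sum_le_sum fun n hn => ?_
    have : (0 : ℝ) < n := by exact_mod_cast pos_of_mem_sfc hn
    have h := log_le_sub_one_of_pos (show 0 < x / n by positivity)
    have : x / n = x * (1 / n) := by ring
    linarith
  have e3 : ∑ n ∈ sfc q x, log n ≤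
      ∑ z ∈ (sfc q x).sigma (fun m => (Ioc 0 ⌊x / (m : ℝ)⌋₊).filter Nat.Prime),
        log (z.2 : ℝ) := by
    have : ∑ n ∈ sfc q x, log (n : ℝ) =
        ∑ z ∈ (sfc q x).sigma (fun n => n.primeFactors), log (z.2 : ℝ) := by
      rw [sum_sigma]
      refine sum_congr rfl fun n hn => ?_
      have h1 := Nat.prod_primeFactors_of_squarefree ((mem_sfc hx0).1 hn).2.1
      conv_lhs => rw [← h1]
      push_cast
      rw [log_prod]
      intro p hp
      have := (Nat.prime_of_mem_primeFactors hp).pos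
      positivity
    rw [this]
    refine sum_le_sum_inj (fun z => ⟨z.1 / z.2, z.2⟩) ?_ ?_ ?_ ?_
    · rintro ⟨n, p⟩ h
      simp only [mem_sigma, mem_sfc hx0, Nat.mem_primeFactors] at h
      obtain ⟨⟨h1, h2, h3⟩, h4, h5, h6⟩ := h
      have hp : (0 : ℝ) < p := by exact_mod_cast h4.pos
      have hn : n / p * p = n := Nat.div_mul_cancel h5
      have hnp : 0 < n / p := Nat.div_pos (Nat.le_of_dvd (Nat.pos_of_ne_zero h6) h5) h4.pos
      have hn' : ((n / p : ℕ) : ℝ) * p = n := by exact_mod_cast hn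
      have hnp' : (0 : ℝ) < ((n / p : ℕ) : ℝ) := by exact_mod_cast hnp
      have hdv : n / p ∣ n := Nat.div_dvd_of_dvd h5
      simp only [mem_sigma, mem_sfc hx0, mem_filter, mem_Ioc]
      refine ⟨⟨?_, h2.squarefree_of_dvd hdv, h3.coprime_dvd_left hdv⟩, ⟨h4.pos, ?_⟩, h4⟩
      · exact le_trans (by exact_mod_cast Nat.div_le_self _ _) h1
      · rw [Nat.le_floor_iff (by positivity), le_div_iff₀ hnp']
        linarith
    · rintro ⟨n, p⟩ h ⟨n', p'⟩ h' heq
      simp only [mem_coe, mem_sigma, Nat.mem_primeFactors] at h h'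
      simp only [Sigma.mk.injEq, heq_eq_eq] at heq
      obtain ⟨h1, rfl⟩ := heq
      have : n = n' := by
        rw [← Nat.div_mul_cancel h.2.2.1, ← Nat.div_mul_cancel h'.2.2.1, h1]
      rw [this]
    · intro z _
      exact le_rfl
    · rintro ⟨n, p⟩ _
      positivity
  have e4 : ∑ z ∈ (sfc q x).sigma (fun m => (Ioc 0 ⌊x / (m : ℝ)⌋₊).filter Nat.Prime),
        log (z.2 : ℝ) ≤ log 4 * x * logSum q x := by
    rw [sum_sigma, logSum, mul_sum]
    refine sum_le_sum fun m hm => ?_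
    have h := Chebyshev.theta_le_log4_mul_x (x := x / m) (by positivity)
    rw [Chebyshev.theta] at h
    refine le_trans (le_of_eq ?_) (h.trans (le_of_eq (by ring)))
    refine sum_congr (by ext; simp) fun _ _ => rfl
  rw [e1]
  nlinarith

lemma log_four_le : log 4 ≤ 2 := by
  have h : (4 : ℝ) = 2 ^ 2 := by norm_num
  rw [h, log_pow]
  have := log_two_lt_d9
  push_cast
  linarith

lemma card_sfc_le {q : ℕ} (hq : q ≠ 0) {x : ℝ} (hx : 1 ≤ x) (hlog : 1 ≤ log x)
    (hw : (2 : ℝ) ^ q.primeFactors.card ≤ x / 4) :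
    logSum q x ≤ 12 * dens q * log x ∧ ((sfc q x).card : ℝ) ≤ 36 * dens q * x := by
  have h1 := logSum_upper hq hx hw
  have h2 := card_sfc_mul_log (q := q) hx
  have h4 := dens_pos hq
  have h3 : logSum q x ≤ 12 * dens q * log x := by nlinarith
  refine ⟨h3, ?_⟩
  have h5 := log_four_le
  have h6 := logSum_nonneg q x
  have h7 : ((sfc q x).card : ℝ) * log x ≤ (36 * dens q * x) * log x := by
    calc ((sfc q x).card : ℝ) * log x ≤ (1 + log 4) * x * logSum q x := h2
      _ ≤ 3 * x * (12 * dens q * log x) := by gcongr; linarith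
      _ = _ := by ring
  exact le_of_mul_le_mul_right h7 (by linarith)

end MultSigns

/-! ### Primes not dividing `q` and uniformity in `q` -/

namespace MultSigns

open Finset Real Filter

/-- The primes in `(R/4, R]` that do not divide `q`. -/
def prm (q : ℕ) (R : ℝ) : Finset ℕ :=
  (range (⌊R⌋₊ + 1)).filter (fun p : ℕ => p.Prime ∧ ¬ p ∣ q ∧ R / 4 < p)

lemma mem_prm {q : ℕ} {R : ℝ} (hR : 0 ≤ R) {p : ℕ} :
    p ∈ prm q R ↔ (p : ℝ) ≤ R ∧ p.Prime ∧ ¬ p ∣ q ∧ R / 4 < p := by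
  simp only [prm, mem_filter, mem_range, Nat.lt_succ_iff, Nat.le_floor_iff hR]

/-- `2^ω(q)` is smaller than any power of `q`. -/
lemma two_pow_omega_le (δ η : ℝ) (hδ : 0 < δ) (hη : 0 < η) :
    ∃ q₀ : ℕ, ∀ q : ℕ, q₀ ≤ q → (2 : ℝ) ^ q.primeFactors.card ≤ η * (q : ℝ) ^ δ := by
  set P : ℕ := ⌈(2 : ℝ) ^ (2 / δ)⌉₊ with hP
  have hlim : Tendsto (fun q : ℕ => (q : ℝ) ^ (δ / 2)) atTop atTop :=
    (tendsto_rpow_atTop (by positivity)).comp tendsto_natCast_atTop_atTop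
  obtain ⟨q₀, hq₀⟩ := eventually_atTop.1 (hlim.eventually_ge_atTop (2 ^ P / η))
  refine ⟨max q₀ 1, fun q hq => ?_⟩
  have hq1 : 0 < q := lt_of_lt_of_le one_pos ((le_max_right _ _).trans hq)
  have h1 := hq₀ q ((le_max_left _ _).trans hq)
  have hprod : (∏ p ∈ q.primeFactors, (p : ℝ)) ≤ q := by
    rw [← Nat.cast_prod, Nat.cast_le]
    exact Nat.le_of_dvd hq1 (Nat.prod_primeFactors_dvd q)
  -- Each prime `p ≥ 2^(2/δ)` satisfies `2 ≤ p^(δ/2)`; fewer than `P + 1` primes are smaller.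
  have h2 : (2 : ℝ) ^ q.primeFactors.card ≤
      (∏ p ∈ q.primeFactors, if p < P then (2 : ℝ) else 1) *
        ∏ p ∈ q.primeFactors, (p : ℝ) ^ (δ / 2) := by
    rw [← prod_mul_distrib, ← prod_const]
    refine prod_le_prod (fun _ _ => by norm_num) fun p hp => ?_
    have hp1 : (1 : ℝ) ≤ p := by exact_mod_cast (Nat.prime_of_mem_primeFactors hp).one_le
    split_ifs with h
    · have := one_le_rpow hp1 (show 0 ≤ δ / 2 by positivity)
      linarith
    · rw [one_mul]
      have h3 : (2 : ℝ) ^ (2 / δ) ≤ p := (Nat.le_ceil _).trans (by exact_mod_cast not_lt.1 h)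
      calc (2 : ℝ) = ((2 : ℝ) ^ (2 / δ)) ^ (δ / 2) := by
            rw [← rpow_mul (by norm_num)]
            have : 2 / δ * (δ / 2) = 1 := by field_simp
            rw [this, rpow_one]
        _ ≤ _ := rpow_le_rpow (by positivity) h3 (by positivity)
  have h3 : (∏ p ∈ q.primeFactors, if p < P then (2 : ℝ) else 1) ≤ 2 ^ P := by
    rw [← prod_filter, prod_const]
    refine pow_le_pow_right₀ (by norm_num) ?_
    calc (q.primeFactors.filter (· < P)).card ≤ (range P).card :=
          card_le_card fun p hp => mem_range.2 (mem_filter.1 hp).2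
      _ = P := card_range P
  have h4 : ∏ p ∈ q.primeFactors, (p : ℝ) ^ (δ / 2) ≤ (q : ℝ) ^ (δ / 2) := by
    rw [finsetProd_rpow _ _ (fun _ _ => by positivity)]
    exact rpow_le_rpow (prod_nonneg fun _ _ => by positivity) hprod (by positivity)
  have h5 : (q : ℝ) ^ δ = (q : ℝ) ^ (δ / 2) * (q : ℝ) ^ (δ / 2) := by
    rw [← rpow_add (by exact_mod_cast hq1)]
    congr 1
    ring
  have h6 : (0 : ℝ) ≤ (q : ℝ) ^ (δ / 2) := by positivity
  have h7 : (2 : ℝ) ^ P ≤ η * (q : ℝ) ^ (δ / 2) := by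
    rw [div_le_iff₀ hη] at h1
    linarith
  calc (2 : ℝ) ^ q.primeFactors.card ≤ 2 ^ P * (q : ℝ) ^ (δ / 2) :=
        h2.trans (mul_le_mul h3 h4 (prod_nonneg fun _ _ => by positivity) (by positivity))
    _ ≤ η * (q : ℝ) ^ (δ / 2) * (q : ℝ) ^ (δ / 2) := by gcongr
    _ = _ := by rw [h5]; ring

/-- For `x` large in terms of `K`, the primes of `(x/4, x]` have `θ`-mass at least
`x/4 + K log x`. -/
lemma theta_interval (K : ℝ) (hK : 0 ≤ K) :
    ∃ x₀ : ℝ, ∀ x : ℝ, x₀ ≤ x →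
      x / 4 + K * log x ≤ Chebyshev.theta x - Chebyshev.theta (x / 4) := by
  have h0 := (isLittleO_log_rpow_atTop (show (0 : ℝ) < 1 / 2 by norm_num)).bound
    (show (0 : ℝ) < 1 / 12 / (K + 6) by positivity)
  obtain ⟨x₀, hx₀⟩ := eventually_atTop.1 h0
  refine ⟨max x₀ 2, fun x hx => ?_⟩
  have hx2 : 2 ≤ x := (le_max_right _ _).trans hx
  have h1 := hx₀ x ((le_max_left _ _).trans hx)
  have hlog : 0 ≤ log x := log_nonneg (by linarith)
  rw [← sqrt_eq_rpow, norm_of_nonneg hlog, norm_of_nonneg (sqrt_nonneg _)] at h1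
  have hs1 : 1 ≤ √x := one_le_sqrt.2 (by linarith)
  have hss : √x * √x = x := mul_self_sqrt (by linarith)
  have h2 := Chebyshev.theta_ge' (x := x) (by linarith)
  have h3 := Chebyshev.theta_le_log4_mul_x (x := x / 4) (by linarith)
  have h4 : log 4 = 2 * log 2 := by
    rw [show (4 : ℝ) = 2 ^ 2 by norm_num, log_pow]; norm_num
  have h5 : log (x + 2) ≤ 2 * log x := by
    rw [← log_rpow (by linarith)]
    refine log_le_log (by linarith) ?_
    norm_num
    nlinarith
  have h6 : log 2 ≤ log x := log_le_log (by norm_num) hx2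
  have h7 := log_two_gt_d9
  have h9 : (K + 6) * log x * √x ≤ x / 12 := by
    calc (K + 6) * log x * √x ≤ (K + 6) * (1 / 12 / (K + 6) * √x) * √x := by gcongr
      _ = 1 / 12 * (√x * √x) := by field_simp
      _ = x / 12 := by rw [hss]; ring
  have h10 : (K + 4) * log x ≤ (K + 4) * log x * √x :=
    le_mul_of_one_le_right (by positivity) hs1
  rw [h4] at h3
  nlinarith

/-- Removing the primes dividing `q` costs at most `log q`, and removing `u` and `v` at most
`2 log x`. -/
lemma sum_log_prm (q : ℕ) (hq : q ≠ 0) (x : ℝ) (hx : 1 ≤ x) (u v : ℕ) :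
    Chebyshev.theta x - Chebyshev.theta (x / 4) - (log q + 2 * log x) ≤
      ∑ p ∈ ((prm q x).erase u).erase v, log (p : ℝ) := by
  have hx0 : 0 ≤ x := by linarith
  have hlx : 0 ≤ log x := log_nonneg hx
  have h1 : Chebyshev.theta x - Chebyshev.theta (x / 4) ≤
      ∑ p ∈ prm q x, log (p : ℝ) + ∑ p ∈ q.primeFactors, log (p : ℝ) := by
    rw [sub_le_iff_le_add, Chebyshev.theta, Chebyshev.theta]
    have hsub : (Ioc 0 ⌊x⌋₊).filter Nat.Prime ⊆
        (prm q x ∪ q.primeFactors) ∪ (Ioc 0 ⌊x / 4⌋₊).filter Nat.Prime := by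
      intro p hp
      simp only [mem_filter, mem_Ioc, mem_union, mem_prm hx0, Nat.le_floor_iff hx0,
        Nat.le_floor_iff (show 0 ≤ x / 4 by linarith), Nat.mem_primeFactors] at hp ⊢
      by_cases h : p ∣ q
      · exact Or.inl (Or.inr ⟨hp.2, h, hq⟩)
      · rcases lt_or_ge (x / 4) (p : ℝ) with h' | h'
        · exact Or.inl (Or.inl ⟨hp.1.2, hp.2, h, h'⟩)
        · exact Or.inr ⟨⟨hp.1.1, h'⟩, hp.2⟩
    have hnn : ∀ p : ℕ, 0 ≤ log (p : ℝ) := fun p => log_natCast_nonneg p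
    have hun : ∀ s t : Finset ℕ, ∑ p ∈ s ∪ t, log (p : ℝ) ≤
        ∑ p ∈ s, log (p : ℝ) + ∑ p ∈ t, log (p : ℝ) := fun s t => by
      rw [← sum_union_inter]
      have := sum_nonneg (s := s ∩ t) fun p _ => hnn p
      linarith
    refine (sum_le_sum_of_subset_of_nonneg hsub fun p _ _ => hnn p).trans ?_
    refine (hun _ _).trans ?_
    have := hun (prm q x) q.primeFactors
    linarith
  have h2 : ∑ p ∈ q.primeFactors, log (p : ℝ) ≤ log q := by
    rw [← log_prod]
    · refine log_le_log (prod_pos fun p hp => ?_) ?_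
      · exact_mod_cast (Nat.prime_of_mem_primeFactors hp).pos
      · rw [← Nat.cast_prod, Nat.cast_le]
        exact Nat.le_of_dvd (Nat.pos_of_ne_zero hq) (Nat.prod_primeFactors_dvd q)
    · intro p hp
      have := (Nat.prime_of_mem_primeFactors hp).pos
      positivity
  have h3 : ∀ (s : Finset ℕ) (u : ℕ), s ⊆ prm q x →
      ∑ p ∈ s, log (p : ℝ) - log x ≤ ∑ p ∈ s.erase u, log (p : ℝ) := by
    intro s u hs
    by_cases hu : u ∈ s
    · rw [← add_sum_erase s _ hu]
      have h := (mem_prm hx0).1 (hs hu)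
      have : log u ≤ log x := log_le_log (by exact_mod_cast h.2.1.pos) h.1
      linarith
    · rw [erase_eq_of_notMem hu]
      linarith
  have h4 := h3 (prm q x) u subset_rfl
  have h5 := h3 ((prm q x).erase u) v (erase_subset _ _)
  linarith

/-- The sieve and prime number bounds at the modulus `q` that hold uniformly beyond `X`. -/
structure Reg (q : ℕ) (X : ℝ) : Prop where
  q_ne : q ≠ 0
  large : 4 ≤ X
  log_large : 1 ≤ log X
  logSum_le : ∀ x, X ≤ x → logSum q x ≤ 12 * dens q * log x
  card_le : ∀ x, X ≤ x → ((sfc q x).card : ℝ) ≤ 36 * dens q * x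
  primes : ∀ x, X ≤ x → ∀ u v : ℕ, x / 4 ≤ ∑ p ∈ ((prm q x).erase u).erase v, log (p : ℝ)

lemma exists_reg (δ : ℝ) (hδ : 0 < δ) :
    ∃ q₀ : ℕ, ∀ q : ℕ, q₀ ≤ q → Reg q ((q : ℝ) ^ δ) := by
  obtain ⟨q₁, h₁⟩ := two_pow_omega_le δ (1 / 4) hδ (by norm_num)
  obtain ⟨x₀, hx₀⟩ := theta_interval (1 / δ + 2) (by positivity)
  have hlim : Tendsto (fun q : ℕ => (q : ℝ) ^ δ) atTop atTop :=
    (tendsto_rpow_atTop hδ).comp tendsto_natCast_atTop_atTop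
  obtain ⟨q₂, h₂⟩ := eventually_atTop.1 (hlim.eventually_ge_atTop (max x₀ 4))
  refine ⟨max (max q₁ q₂) 1, fun q hq => ?_⟩
  simp only [max_le_iff] at hq
  have hq0 : q ≠ 0 := by omega
  have hX := h₂ q hq.1.2
  simp only [max_le_iff] at hX
  have hw := h₁ q hq.1.1
  have hlogX : 1 ≤ log ((q : ℝ) ^ δ) := by
    rw [le_log_iff_exp_le (by linarith)]
    have := exp_one_lt_d9
    linarith
  have hl : ∀ x, (q : ℝ) ^ δ ≤ x → 1 ≤ log x := fun x hx =>
    hlogX.trans (log_le_log (by linarith) hx)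
  have hc : ∀ x, (q : ℝ) ^ δ ≤ x → _ := fun x hx =>
    card_sfc_le hq0 (x := x) (by linarith) (hl x hx) (by linarith)
  refine ⟨hq0, hX.2, hlogX, fun x hx => (hc x hx).1, fun x hx => (hc x hx).2, ?_⟩
  intro x hx u v
  have h3 := hx₀ x (hX.1.trans hx)
  have h4 := sum_log_prm q hq0 x (by linarith) u v
  have h5 : log q ≤ 1 / δ * log x := by
    have : δ * log q ≤ log x := by
      rw [← log_rpow (by positivity)]
      exact log_le_log (by linarith) hx
    rw [one_div, ← div_eq_inv_mul, le_div_iff₀ hδ]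
    linarith
  linarith

end MultSigns

/-! ### Logarithmic mass of the positive values -/

namespace MultSigns

open Finset Real Filter

section Mult

variable {h : ℕ → ℝ} {q : ℕ}

lemma mult_prod (hm : IsMultFn h) (t : Finset ℕ) (ht : ∀ p ∈ t, p.Prime) :
    h (∏ p ∈ t, p) = ∏ p ∈ t, h p := by
  induction t using Finset.induction_on with
  | empty => simpa using hm.1
  | insert a s ha ih =>
    have hs : ∀ p ∈ s, p.Prime := fun p hp => ht p (mem_insert_of_mem hp)
    rw [prod_insert ha, prod_insert ha, hm.2, ih hs]
    refine Nat.Coprime.prod_right fun p hp => ?_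
    rw [Nat.coprime_primes (ht a (mem_insert_self _ _)) (hs p hp)]
    rintro rfl
    exact ha hp

lemma mult_ne_zero (hm : IsMultFn h) (hne : ∀ p : ℕ, p.Prime → ¬ p ∣ q → h p ≠ 0) {n : ℕ}
    (hn : Squarefree n) (hc : Nat.Coprime n q) : h n ≠ 0 := by
  rw [← Nat.prod_primeFactors_of_squarefree hn,
    mult_prod hm _ fun p hp => Nat.prime_of_mem_primeFactors hp, prod_ne_zero_iff]
  intro p hp
  have hp' := Nat.prime_of_mem_primeFactors hp
  refine hne p hp' fun hd => ?_
  exact hp'.one_lt.ne' (Nat.eq_one_of_dvd_coprimes hc (Nat.dvd_of_mem_primeFactors hp) hd)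

/-- The convolution of `1` with the sign of `h` on squarefree integers coprime to `q` is
`∏_{p ∣ n} (1 + f p)` with `f p ∈ {-1, 0, 1}`. -/
lemma divisor_sum_nonneg (hm : IsMultFn h) {n : ℕ} (hn : n ≠ 0) :
    0 ≤ ∑ d ∈ n.divisors.filter Squarefree, if Nat.Coprime d q then h d / |h d| else 0 := by
  rw [sum_sqfree_divisors hn]
  have : ∀ t ∈ n.primeFactors.powerset,
      (if Nat.Coprime (∏ p ∈ t, p) q then h (∏ p ∈ t, p) / |h (∏ p ∈ t, p)| else 0) =
        ∏ p ∈ t, if Nat.Coprime p q then h p / |h p| else 0 := by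
    intro t ht
    rw [prod_ite_zero, mult_prod hm t fun p hp =>
      Nat.prime_of_mem_primeFactors (mem_powerset.1 ht hp), abs_prod, prod_div_distrib]
    simp only [Nat.coprime_prod_left_iff]
  rw [sum_congr rfl this, ← prod_one_add]
  refine prod_nonneg fun p _ => ?_
  split_ifs
  · have : -1 ≤ h p / |h p| := by
      rcases eq_or_ne (h p) 0 with h0 | h0
      · simp [h0]
      · rw [le_div_iff₀ (abs_pos.2 h0)]
        have := neg_abs_le (h p)
        linarith
    linarith
  · norm_num

/-- Summing `1 * f ≥ 0` over `n ≤ x` bounds the logarithmic sum of the signs from below. -/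
lemma sign_logSum_lower (hm : IsMultFn h) {x : ℝ} (hx : 1 ≤ x) :
    0 ≤ x * ∑ b ∈ sfc q x, h b / |h b| * (1 / (b : ℝ)) + (sfc q x).card := by
  have hx0 : 0 ≤ x := by linarith
  have h1 : 0 ≤ ∑ n ∈ Ioc 0 ⌊x⌋₊, ∑ d ∈ sfc q x, if d ∣ n then h d / |h d| else 0 := by
    refine sum_nonneg fun n hn => ?_
    rw [mem_Ioc, Nat.le_floor_iff hx0] at hn
    have := divisor_sum_nonneg (q := q) hm (n := n) (by omega)
    rw [← sum_filter] at this ⊢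
    refine this.trans (le_of_eq (sum_congr ?_ fun _ _ => rfl))
    ext d
    simp only [mem_filter, Nat.mem_divisors, mem_sfc hx0]
    constructor
    · rintro ⟨⟨⟨a, b⟩, c⟩, e⟩
      exact ⟨⟨le_trans (by exact_mod_cast Nat.le_of_dvd hn.1 a) hn.2, c, e⟩, a⟩
    · rintro ⟨⟨_, c, e⟩, a⟩
      exact ⟨⟨⟨a, by omega⟩, c⟩, e⟩
  rw [sum_comm] at h1
  refine h1.trans ?_
  rw [mul_sum, ← nsmul_one, ← sum_const, ← sum_add_distrib]
  refine sum_le_sum fun d hd => ?_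
  rw [← sum_filter, sum_const, Nat.Ioc_filter_dvd_card_eq_div, nsmul_eq_mul]
  have hd0 : (0 : ℝ) < d := by exact_mod_cast pos_of_mem_sfc hd
  have e1 : ((⌊x⌋₊ / d : ℕ) : ℝ) = (⌊x / d⌋₊ : ℕ) := by rw [Nat.floor_div_natCast]
  have e2 := Nat.floor_le (show 0 ≤ x / d by positivity)
  have e3 := Nat.lt_floor_add_one (x / d)
  rw [e1]
  have e4 : x * (h d / |h d| * (1 / (d : ℝ))) = h d / |h d| * (x / d) := by ring
  rw [e4]
  rcases lt_trichotomy (h d) 0 with h0 | h0 | h0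
  · have : h d / |h d| = -1 := by rw [abs_of_neg h0, div_neg, div_self h0.ne]
    rw [this]; linarith
  · simp [h0]
  · have : h d / |h d| = 1 := by rw [abs_of_pos h0, div_self h0.ne']
    rw [this]; linarith

/-- The positive signs carry at least a fixed proportion of the logarithmic sum. The threshold `144`
lets half of the total `dens q * log x / 2` absorb the error `36 * dens q`. -/
lemma pos_logSum_lower (hm : IsMultFn h) (hne : ∀ p : ℕ, p.Prime → ¬ p ∣ q → h p ≠ 0)
    {X x : ℝ} (hr : Reg q X) (hx : X ≤ x) (hlog : 144 ≤ log x) :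
    dens q * log x / 8 ≤ ∑ b ∈ (sfc q x).filter (fun b => 0 < h b), 1 / (b : ℝ) := by
  have hx1 : 1 ≤ x := by linarith [hr.large]
  have h1 := sign_logSum_lower (q := q) hm hx1
  have h2 := logSum_lower hr.q_ne hx1
  have h3 := hr.card_le x hx
  have h4 := dens_pos hr.q_ne
  have h5 : ∑ b ∈ sfc q x, h b / |h b| * (1 / (b : ℝ)) =
      2 * ∑ b ∈ (sfc q x).filter (fun b => 0 < h b), 1 / (b : ℝ) - logSum q x := by
    rw [logSum, sum_filter, mul_sum, ← sum_sub_distrib]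
    refine sum_congr rfl fun b hb => ?_
    have hb' := (mem_sfc (by linarith)).1 hb
    rcases lt_or_gt_of_ne (mult_ne_zero hm hne hb'.2.1 hb'.2.2) with h0 | h0
    · rw [abs_of_neg h0, div_neg, div_self h0.ne, if_neg (by linarith)]; ring
    · rw [abs_of_pos h0, div_self h0.ne', if_pos h0]; ring
  have h6 : 0 ≤ x * (∑ b ∈ sfc q x, h b / |h b| * (1 / (b : ℝ)) + 36 * dens q) := by
    linarith
  have h7 := nonneg_of_mul_nonneg_right h6 (by linarith)
  rw [h5] at h7
  nlinarith

end Mult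

/-- If every triple of distinct `p, r, s` satisfies one of three pairwise conditions, then the
total weight of triples is covered by the weights of the three conditions. -/
lemma triple_cover (I₁ I₂ I₃ : Finset ℕ) (w : ℕ → ℝ) (hw : ∀ n, 0 ≤ w n) {r₁ r₂ r₃ t₁ t₂ t₃ : ℝ}
    (hr₂ : 0 ≤ r₂) (hr₃ : 0 ≤ r₃)
    (h₁ : ∀ u v, r₁ ≤ ∑ p ∈ (I₁.erase u).erase v, w p)
    (h₂ : ∀ u v, r₂ ≤ ∑ p ∈ (I₂.erase u).erase v, w p)
    (h₃ : ∀ u v, r₃ ≤ ∑ p ∈ (I₃.erase u).erase v, w p)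
    (ht₁ : ∑ p ∈ I₁, w p ≤ t₁) (ht₂ : ∑ p ∈ I₂, w p ≤ t₂) (ht₃ : ∑ p ∈ I₃, w p ≤ t₃)
    (e₁ e₂ e₃ : ℕ → ℕ → ℝ) (he₁ : ∀ a b, 0 ≤ e₁ a b) (he₂ : ∀ a b, 0 ≤ e₂ a b)
    (he₃ : ∀ a b, 0 ≤ e₃ a b)
    (hcov : ∀ p ∈ I₁, ∀ r ∈ I₂, ∀ s ∈ I₃, p ≠ r → p ≠ s → r ≠ s →
      1 ≤ e₃ p r + e₂ p s + e₁ r s) :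
    r₁ * r₂ * r₃ ≤ t₃ * ∑ p ∈ I₁, ∑ r ∈ I₂, w p * w r * e₃ p r +
      t₂ * ∑ p ∈ I₁, ∑ s ∈ I₃, w p * w s * e₂ p s +
      t₁ * ∑ r ∈ I₂, ∑ s ∈ I₃, w r * w s * e₁ r s := by
  have step1 : r₁ * r₂ * r₃ ≤ ∑ p ∈ I₁, ∑ r ∈ (I₂.erase p).erase p,
      ∑ s ∈ (I₃.erase p).erase r, w p * w r * w s := by
    have a : ∀ p r, r₃ * (w p * w r) ≤ ∑ s ∈ (I₃.erase p).erase r, w p * w r * w s := by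
      intro p r
      rw [← mul_sum, mul_comm]
      exact mul_le_mul_of_nonneg_left (h₃ p r) (mul_nonneg (hw p) (hw r))
    have b : ∀ p, r₂ * r₃ * w p ≤ ∑ r ∈ (I₂.erase p).erase p,
        ∑ s ∈ (I₃.erase p).erase r, w p * w r * w s := by
      intro p
      refine le_trans ?_ (sum_le_sum fun r _ => a p r)
      rw [← mul_sum, ← mul_sum]
      have := mul_le_mul_of_nonneg_left (h₂ p p) (mul_nonneg hr₃ (hw p))
      linarith
    refine le_trans ?_ (sum_le_sum fun p _ => b p)
    rw [← mul_sum]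
    have c : r₁ ≤ ∑ p ∈ I₁, w p := (h₁ 0 0).trans
      (sum_le_sum_of_subset_of_nonneg ((erase_subset _ _).trans (erase_subset _ _))
        fun _ _ _ => hw _)
    have := mul_le_mul_of_nonneg_left c (mul_nonneg hr₂ hr₃)
    linarith
  have step2 : ∑ p ∈ I₁, ∑ r ∈ (I₂.erase p).erase p,
      ∑ s ∈ (I₃.erase p).erase r, w p * w r * w s ≤
      ∑ p ∈ I₁, ∑ r ∈ I₂, ∑ s ∈ I₃, w p * w r * w s * (e₃ p r + e₂ p s + e₁ r s) := by
    have nn : ∀ p r s, 0 ≤ w p * w r * w s * (e₃ p r + e₂ p s + e₁ r s) := fun p r s =>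
      mul_nonneg (mul_nonneg (mul_nonneg (hw p) (hw r)) (hw s))
        (add_nonneg (add_nonneg (he₃ _ _) (he₂ _ _)) (he₁ _ _))
    refine sum_le_sum fun p hp => ?_
    refine le_trans (sum_le_sum fun r hr => ?_) (sum_le_sum_of_subset_of_nonneg
      ((erase_subset p _).trans (erase_subset p _)) fun r _ _ => sum_nonneg fun s _ => nn p r s)
    refine le_trans (sum_le_sum fun s hs => ?_) (sum_le_sum_of_subset_of_nonneg
      ((erase_subset r _).trans (erase_subset p _)) fun s _ _ => nn p r s)
    simp only [mem_erase] at hr hs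
    exact le_mul_of_one_le_right (mul_nonneg (mul_nonneg (hw p) (hw r)) (hw s))
      (hcov p hp r hr.2.2 s hs.2.2 (Ne.symm hr.1) (Ne.symm hs.2.1) (Ne.symm hs.1))
  have step3 : ∑ p ∈ I₁, ∑ r ∈ I₂, ∑ s ∈ I₃, w p * w r * w s * (e₃ p r + e₂ p s + e₁ r s) =
      (∑ s ∈ I₃, w s) * ∑ p ∈ I₁, ∑ r ∈ I₂, w p * w r * e₃ p r +
      (∑ r ∈ I₂, w r) * ∑ p ∈ I₁, ∑ s ∈ I₃, w p * w s * e₂ p s +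
      (∑ p ∈ I₁, w p) * ∑ r ∈ I₂, ∑ s ∈ I₃, w r * w s * e₁ r s := by
    simp only [mul_add, sum_add_distrib]
    congr 1
    · congr 1
      · rw [mul_sum]
        refine sum_congr rfl fun p _ => ?_
        rw [mul_sum]
        refine sum_congr rfl fun r _ => ?_
        rw [sum_mul]
        exact sum_congr rfl fun s _ => by ring
      · rw [mul_sum]
        refine sum_congr rfl fun p _ => ?_
        rw [sum_mul]
        refine sum_congr rfl fun r _ => ?_
        rw [mul_sum]
        exact sum_congr rfl fun s _ => by ring
    · rw [sum_mul]
      refine sum_congr rfl fun p _ => ?_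
      rw [mul_sum]
      refine sum_congr rfl fun r _ => ?_
      rw [mul_sum]
      exact sum_congr rfl fun s _ => by ring
  refine step1.trans (step2.trans (step3.le.trans ?_))
  have n3 : 0 ≤ ∑ p ∈ I₁, ∑ r ∈ I₂, w p * w r * e₃ p r := sum_nonneg fun p _ =>
    sum_nonneg fun r _ => mul_nonneg (mul_nonneg (hw p) (hw r)) (he₃ _ _)
  have n2 : 0 ≤ ∑ p ∈ I₁, ∑ s ∈ I₃, w p * w s * e₂ p s := sum_nonneg fun p _ =>
    sum_nonneg fun r _ => mul_nonneg (mul_nonneg (hw p) (hw r)) (he₂ _ _)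
  have n1 : 0 ≤ ∑ r ∈ I₂, ∑ s ∈ I₃, w r * w s * e₁ r s := sum_nonneg fun p _ =>
    sum_nonneg fun r _ => mul_nonneg (mul_nonneg (hw p) (hw r)) (he₁ _ _)
  gcongr

lemma sum_log_prm_le (q : ℕ) {x : ℝ} (hx : 0 ≤ x) : ∑ p ∈ prm q x, log (p : ℝ) ≤ 2 * x := by
  have h1 := Chebyshev.theta_le_log4_mul_x hx
  have h2 := log_four_le
  have h3 : ∑ p ∈ prm q x, log (p : ℝ) ≤ Chebyshev.theta x := by
    rw [Chebyshev.theta]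
    refine sum_le_sum_of_subset_of_nonneg ?_ fun p _ _ => log_natCast_nonneg p
    intro p hp
    rw [mem_prm hx] at hp
    simp only [mem_filter, mem_Ioc, Nat.le_floor_iff hx]
    exact ⟨⟨hp.2.1.pos, hp.1⟩, hp.2.1⟩
  nlinarith

end MultSigns

/-! ### Triples of primes -/

namespace MultSigns

open Finset Real Filter

/-- The scale `√(y a / (b c))` of the primes attached to `a` inside a triple `{a, b, c}`; the scales
attached to `a` and `b` multiply to `y / c`. -/
def rad (y : ℝ) (a b c : ℕ) : ℝ := √(y * a / (b * c))

lemma rad_symm (y : ℝ) (a b c : ℕ) : rad y a b c = rad y a c b := by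
  rw [rad, rad, mul_comm (b : ℝ)]

lemma rad_nonneg (y : ℝ) (a b c : ℕ) : 0 ≤ rad y a b c := sqrt_nonneg _

lemma rad_mul {y : ℝ} (hy : 0 ≤ y) {a b c : ℕ} (ha : 0 < a) (hb : 0 < b) (hc : 0 < c) :
    rad y a b c * rad y b a c = y / c := by
  rw [rad, rad, ← sqrt_mul (by positivity), sqrt_eq_iff_mul_self_eq (by positivity) (by positivity)]
  field_simp

lemma rad_lower {y A : ℝ} (hA : 1 ≤ A) (hy : A ^ 8 ≤ y) {a b c : ℕ} (ha : 0 < a) (hb : 0 < b)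
    (hc : 0 < c) (hbA : (b : ℝ) ≤ A) (hcA : (c : ℝ) ≤ A) : A ^ 3 ≤ rad y a b c := by
  have hb' : (0 : ℝ) < b := by exact_mod_cast hb
  have hc' : (0 : ℝ) < c := by exact_mod_cast hc
  have ha' : (1 : ℝ) ≤ a := by exact_mod_cast ha
  apply le_sqrt_of_sq_le
  rw [le_div_iff₀ (by positivity)]
  have h1 : (b : ℝ) * c ≤ A * A := by gcongr
  have h2 : (A ^ 3) ^ 2 * (b * c) ≤ (A ^ 3) ^ 2 * (A * A) := by gcongr
  have h3 : y * 1 ≤ y * a := by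
    have : 0 ≤ y := le_trans (by positivity) hy
    gcongr
  nlinarith

/-- For fixed `p`, `b`, `c` the values of `a` whose scale admits `p` lie in an interval `[t, 16 t]`,
so their logarithmic mass is at most a constant times the density of the squarefree integers coprime to `q`. -/
lemma inner_sum {q : ℕ} {X y A : ℝ} (hr : Reg q X) (hy : 0 < y) (B : Finset ℕ)
    (hB : ∀ a ∈ B, a ∈ sfc q A ∧ X ≤ (a : ℝ)) {p b c : ℕ} (hb : 0 < b) (hc : 0 < c) :
    ∑ a ∈ B, (if p ∈ prm q (rad y a b c) then 1 / (a : ℝ) else 0) ≤ 576 * dens q := by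
  have hd := dens_pos hr.q_ne
  rw [← sum_filter]
  have hb' : (0 : ℝ) < b := by exact_mod_cast hb
  have hc' : (0 : ℝ) < c := by exact_mod_cast hc
  set F := B.filter (fun a => p ∈ prm q (rad y a b c)) with hF
  rcases F.eq_empty_or_nonempty with h0 | ⟨a₀, ha₀⟩
  · rw [h0, sum_empty]; positivity
  set t : ℝ := (p : ℝ) ^ 2 * (b * c) / y with ht
  have hab : ∀ a ∈ F, a ∈ sfc q A ∧ X ≤ (a : ℝ) ∧ 0 < t ∧ t ≤ a ∧ (a : ℝ) ≤ 16 * t := by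
    intro a ha
    rw [hF, mem_filter, mem_prm (rad_nonneg _ _ _ _)] at ha
    obtain ⟨haB, hp1, hp2, -, hp3⟩ := ha
    have hp0 : (0 : ℝ) < p := by exact_mod_cast hp2.pos
    have hsq : rad y a b c ^ 2 = y * a / (b * c) := sq_sqrt (by positivity)
    have e1 : (p : ℝ) ^ 2 ≤ y * a / (b * c) := by
      rw [← hsq]; gcongr
    have e2 : y * a / (b * c) ≤ 16 * (p : ℝ) ^ 2 := by
      rw [← hsq]
      have : rad y a b c ≤ 4 * p := by linarith
      have := pow_le_pow_left₀ (rad_nonneg y a b c) this 2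
      linarith
    rw [le_div_iff₀ (by positivity)] at e1
    rw [div_le_iff₀ (by positivity)] at e2
    refine ⟨(hB a haB).1, (hB a haB).2, by positivity, ?_, ?_⟩
    · rw [ht, div_le_iff₀ hy]; linarith
    · rw [ht, ← mul_div_assoc, le_div_iff₀ hy]; linarith
  obtain ⟨-, hX, ht0, -, hle⟩ := hab a₀ ha₀
  have hsub : F ⊆ sfc q (16 * t) := by
    intro a ha
    obtain ⟨h1, -, -, -, h4⟩ := hab a ha
    rw [mem_sfc (by linarith)]
    simp only [sfc, mem_filter] at h1
    exact ⟨h4, h1.2⟩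
  calc ∑ a ∈ F, 1 / (a : ℝ) ≤ ∑ a ∈ F, 1 / t := sum_le_sum fun a ha => by
        obtain ⟨-, -, -, h3, -⟩ := hab a ha
        gcongr
    _ = (F.card : ℝ) * (1 / t) := by rw [sum_const, nsmul_eq_mul]
    _ ≤ (36 * dens q * (16 * t)) * (1 / t) := by
        gcongr
        refine le_trans ?_ (hr.card_le (16 * t) (hX.trans hle))
        exact_mod_cast card_le_card hsub
    _ = 576 * dens q := by field_simp; norm_num

/-- The indicator of `p ≠ r` and `h (c p r) > 0`. -/
def pairInd (h : ℕ → ℝ) (c p r : ℕ) : ℝ := if p ≠ r ∧ 0 < h (c * p * r) then 1 else 0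

lemma pairInd_nonneg (h : ℕ → ℝ) (c p r : ℕ) : 0 ≤ pairInd h c p r := by
  rw [pairInd]; split_ifs <;> norm_num

lemma pairInd_eq_one {h : ℕ → ℝ} {c p r : ℕ} (hpr : p ≠ r) (hc : 0 < h (c * p * r)) :
    pairInd h c p r = 1 := if_pos ⟨hpr, hc⟩

/-- The weight `log p · log r` of the pairs of distinct primes `p, r` at the scales attached to `a`
and `b` for which `h (c p r) > 0`. -/
def pairSum (h : ℕ → ℝ) (q : ℕ) (y : ℝ) (c a b : ℕ) : ℝ :=
  ∑ p ∈ prm q (rad y a b c), ∑ r ∈ prm q (rad y b a c),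
    log (p : ℝ) * log (r : ℝ) * pairInd h c p r

section Core

variable {h : ℕ → ℝ} {q : ℕ} {X y A : ℝ}

/-- Three positive values `h b₁, h b₂, h b₃` and distinct primes `p, r, s`: the product of
`h (b₃ p r)`, `h (b₂ p s)` and `h (b₁ r s)` is `h b₁ h b₂ h b₃` times a square, so one of the three
is positive. -/
lemma sign_triple (hm : IsMultFn h) {p r s b₁ b₂ b₃ : ℕ} (hp : p.Prime) (hr : r.Prime)
    (hs : s.Prime) (hpr : p ≠ r) (hps : p ≠ s) (hrs : r ≠ s)
    (hp0 : h p ≠ 0) (hr0 : h r ≠ 0) (hs0 : h s ≠ 0)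
    (hb₁ : 0 < h b₁) (hb₂ : 0 < h b₂) (hb₃ : 0 < h b₃)
    (c₃p : Nat.Coprime b₃ p) (c₃r : Nat.Coprime b₃ r) (c₂p : Nat.Coprime b₂ p)
    (c₂s : Nat.Coprime b₂ s) (c₁r : Nat.Coprime b₁ r) (c₁s : Nat.Coprime b₁ s) :
    0 < h (b₃ * p * r) ∨ 0 < h (b₂ * p * s) ∨ 0 < h (b₁ * r * s) := by
  have cpr := (Nat.coprime_primes hp hr).2 hpr
  have cps := (Nat.coprime_primes hp hs).2 hps
  have crs := (Nat.coprime_primes hr hs).2 hrs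
  rw [hm.2 _ _ (Nat.Coprime.mul_left c₃r cpr), hm.2 _ _ c₃p,
    hm.2 _ _ (Nat.Coprime.mul_left c₂s cps), hm.2 _ _ c₂p,
    hm.2 _ _ (Nat.Coprime.mul_left c₁s crs), hm.2 _ _ c₁r]
  simp only [mul_assoc, mul_pos_iff_of_pos_left hb₁, mul_pos_iff_of_pos_left hb₂,
    mul_pos_iff_of_pos_left hb₃, mul_pos_iff]
  rcases lt_or_gt_of_ne hp0 with h1 | h1 <;> rcases lt_or_gt_of_ne hr0 with h2 | h2 <;>
    rcases lt_or_gt_of_ne hs0 with h3 | h3 <;> simp [h1, h2, h3]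

lemma coprime_of_lt_prime {b p : ℕ} (hp : p.Prime) (hb : 0 < b) (hbp : b < p) :
    Nat.Coprime b p :=
  ((hp.coprime_iff_not_dvd).2 fun hd => by have := Nat.le_of_dvd hb hd; omega).symm

lemma lt_of_mem_prm {R : ℝ} (hA : 4 ≤ A) (hR : A ^ 3 ≤ R) {p : ℕ} (hp : p ∈ prm q R) :
    A < p ∧ (p : ℝ) ≤ R ∧ p.Prime ∧ ¬ p ∣ q := by
  rw [mem_prm (le_trans (by positivity) hR)] at hp
  refine ⟨?_, hp.1, hp.2.1, hp.2.2.1⟩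
  have h1 : 4 * 4 * A ≤ A * A * A := by gcongr
  have h2 : A ^ 3 = A * A * A := by ring
  linarith [hp.2.2.2]

/-- For fixed `b₁, b₂, b₃` the prime pairs giving positive values have the expected total weight. -/
lemma triple_ineq (hm : IsMultFn h) (hne : ∀ p : ℕ, p.Prime → ¬ p ∣ q → h p ≠ 0)
    (hr : Reg q X) (hXA : X ≤ A) (hy : A ^ 8 ≤ y) {b₁ b₂ b₃ : ℕ}
    (h₁ : 0 < b₁ ∧ (b₁ : ℝ) ≤ A ∧ 0 < h b₁) (h₂ : 0 < b₂ ∧ (b₂ : ℝ) ≤ A ∧ 0 < h b₂)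
    (h₃ : 0 < b₃ ∧ (b₃ : ℝ) ≤ A ∧ 0 < h b₃) :
    y / 128 ≤ b₃ * pairSum h q y b₃ b₁ b₂ + b₂ * pairSum h q y b₂ b₁ b₃ +
      b₁ * pairSum h q y b₁ b₂ b₃ := by
  have hA4 : 4 ≤ A := hr.large.trans hXA
  have hA1 : 1 ≤ A := by linarith
  have hy0 : 0 < y := lt_of_lt_of_le (by positivity) hy
  have l₁ := rad_lower hA1 hy h₁.1 h₂.1 h₃.1 h₂.2.1 h₃.2.1
  have l₂ := rad_lower hA1 hy h₂.1 h₁.1 h₃.1 h₁.2.1 h₃.2.1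
  have l₃ := rad_lower hA1 hy h₃.1 h₁.1 h₂.1 h₁.2.1 h₂.2.1
  have m₃ := rad_mul hy0.le h₁.1 h₂.1 h₃.1
  have m₂ := rad_mul hy0.le h₁.1 h₃.1 h₂.1
  have m₁ := rad_mul hy0.le h₂.1 h₃.1 h₁.1
  have hX3 : X ≤ A ^ 3 := hXA.trans (le_self_pow₀ hA1 (by norm_num))
  unfold pairSum
  rw [rad_symm y b₁ b₃ b₂] at m₂ ⊢
  rw [rad_symm y b₂ b₃ b₁, rad_symm y b₃ b₂ b₁] at m₁ ⊢
  set R₁ := rad y b₁ b₂ b₃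
  set R₂ := rad y b₂ b₁ b₃
  set R₃ := rad y b₃ b₁ b₂
  have hA3 : 0 < A ^ 3 := by positivity
  have p₁ : 0 < R₁ := by linarith
  have p₂ : 0 < R₂ := by linarith
  have p₃ : 0 < R₃ := by linarith
  have key := triple_cover (prm q R₁) (prm q R₂) (prm q R₃) (fun n => log (n : ℝ))
    (fun n => log_natCast_nonneg n) (r₁ := R₁ / 4) (r₂ := R₂ / 4) (r₃ := R₃ / 4)
    (by positivity) (by positivity)
    (hr.primes _ (hX3.trans l₁)) (hr.primes _ (hX3.trans l₂)) (hr.primes _ (hX3.trans l₃))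
    (sum_log_prm_le q p₁.le) (sum_log_prm_le q p₂.le) (sum_log_prm_le q p₃.le)
    (pairInd h b₁) (pairInd h b₂) (pairInd h b₃) (pairInd_nonneg h b₁) (pairInd_nonneg h b₂)
    (pairInd_nonneg h b₃) ?_
  · set g₃ := ∑ p ∈ prm q R₁, ∑ r ∈ prm q R₂, log (p : ℝ) * log (r : ℝ) * pairInd h b₃ p r
    set g₂ := ∑ p ∈ prm q R₁, ∑ r ∈ prm q R₃, log (p : ℝ) * log (r : ℝ) * pairInd h b₂ p r
    set g₁ := ∑ p ∈ prm q R₂, ∑ r ∈ prm q R₃, log (p : ℝ) * log (r : ℝ) * pairInd h b₁ p r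
    have c₁ : (0 : ℝ) < b₁ := by exact_mod_cast h₁.1
    have c₂ : (0 : ℝ) < b₂ := by exact_mod_cast h₂.1
    have c₃ : (0 : ℝ) < b₃ := by exact_mod_cast h₃.1
    rw [eq_div_iff c₁.ne'] at m₁
    rw [eq_div_iff c₂.ne'] at m₂
    rw [eq_div_iff c₃.ne'] at m₃
    -- After multiplication by `R₁ R₂ R₃`, each term is rewritten with `y = R_i R_j b_k`.
    refine le_of_mul_le_mul_left ?_ (mul_pos (mul_pos p₁ p₂) p₃)
    have f : R₁ * R₂ * R₃ * (b₃ * g₃ + b₂ * g₂ + b₁ * g₁) =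
        y / 2 * (2 * R₃ * g₃ + 2 * R₂ * g₂ + 2 * R₁ * g₁) := by
      linear_combination R₃ * g₃ * m₃ + R₂ * g₂ * m₂ + R₁ * g₁ * m₁
    rw [f]
    have := mul_le_mul_of_nonneg_left key (show 0 ≤ y / 2 by positivity)
    linarith
  · intro p hp r hr' s hs hpr hps hrs
    have kp := lt_of_mem_prm hA4 l₁ hp
    have kr := lt_of_mem_prm hA4 l₂ hr'
    have ks := lt_of_mem_prm hA4 l₃ hs
    have cop : ∀ {b t : ℕ}, (0 < b ∧ (b : ℝ) ≤ A ∧ 0 < h b) → A < t → t.Prime →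
        Nat.Coprime b t := fun hb ht htp =>
      coprime_of_lt_prime htp hb.1 (by exact_mod_cast hb.2.1.trans_lt ht)
    rcases sign_triple hm kp.2.2.1 kr.2.2.1 ks.2.2.1 hpr hps hrs
      (hne p kp.2.2.1 kp.2.2.2) (hne r kr.2.2.1 kr.2.2.2) (hne s ks.2.2.1 ks.2.2.2)
      h₁.2.2 h₂.2.2 h₃.2.2 (cop h₃ kp.1 kp.2.2.1) (cop h₃ kr.1 kr.2.2.1)
      (cop h₂ kp.1 kp.2.2.1) (cop h₂ ks.1 ks.2.2.1) (cop h₁ kr.1 kr.2.2.1)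
      (cop h₁ ks.1 ks.2.2.1) with H | H | H
    · linarith [pairInd_eq_one hpr H, pairInd_nonneg h b₂ p s, pairInd_nonneg h b₁ r s]
    · linarith [pairInd_eq_one hps H, pairInd_nonneg h b₃ p r, pairInd_nonneg h b₁ r s]
    · linarith [pairInd_eq_one hrs H, pairInd_nonneg h b₃ p r, pairInd_nonneg h b₂ p s]

end Core

end MultSigns

/-! ### Counting positive values -/

namespace MultSigns

open Finset Real Filter

/-- Primes `p ≤ y` with `p > A` and `p ∤ q`. -/
def bigPrm (q : ℕ) (A y : ℝ) : Finset ℕ :=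
  (range (⌊y⌋₊ + 1)).filter (fun p : ℕ => p.Prime ∧ ¬ p ∣ q ∧ A < p)

/-- The representations `c p r ≤ y` of integers with `h (c p r) > 0`, where `c ∈ B` and `p ≠ r` are
primes larger than `A`. -/
def reps (h : ℕ → ℝ) (q : ℕ) (A y : ℝ) (B : Finset ℕ) : Finset (ℕ × ℕ × ℕ) :=
  (B ×ˢ bigPrm q A y ×ˢ bigPrm q A y).filter
    (fun u => u.2.1 ≠ u.2.2 ∧ 0 < h (u.1 * u.2.1 * u.2.2) ∧
      ((u.1 * u.2.1 * u.2.2 : ℕ) : ℝ) ≤ y)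

section Core2

variable {h : ℕ → ℝ} {q : ℕ} {X y A : ℝ}

lemma mem_bigPrm (hy : 0 ≤ y) {p : ℕ} :
    p ∈ bigPrm q A y ↔ (p : ℝ) ≤ y ∧ p.Prime ∧ ¬ p ∣ q ∧ A < p := by
  simp only [bigPrm, mem_filter, mem_range, Nat.lt_succ_iff, Nat.le_floor_iff hy]

/-- An integer `c p r` with `c ≤ A < p, r` determines `{p, r}` and `c`, so it has at most four
representations. -/
lemma card_reps_le (hy : 0 ≤ y) {B : Finset ℕ} (hB : B ⊆ sfc q A) (hA : 0 ≤ A) :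
    (reps h q A y B).card ≤ 4 * ((sfc q y).filter (fun n => 0 < h n)).card := by
  have unp : ∀ u ∈ reps h q A y B, (0 < u.1 ∧ (u.1 : ℝ) ≤ A ∧ Squarefree u.1 ∧
      Nat.Coprime u.1 q) ∧ (u.2.1.Prime ∧ ¬ u.2.1 ∣ q ∧ A < u.2.1) ∧
      (u.2.2.Prime ∧ ¬ u.2.2 ∣ q ∧ A < u.2.2) ∧ u.2.1 ≠ u.2.2 ∧
      0 < h (u.1 * u.2.1 * u.2.2) ∧ ((u.1 * u.2.1 * u.2.2 : ℕ) : ℝ) ≤ y := by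
    intro u hu
    simp only [reps, mem_filter, mem_product, mem_bigPrm hy] at hu
    exact ⟨⟨pos_of_mem_sfc (hB hu.1.1), (mem_sfc hA).1 (hB hu.1.1)⟩, hu.1.2.1.2, hu.1.2.2.2, hu.2⟩
  refine card_le_mul_card_image_of_maps_to (f := fun u => u.1 * u.2.1 * u.2.2) ?_ 4 ?_
  · intro u hu
    obtain ⟨⟨c0, cA, csq, ccop⟩, ⟨pp, pq, pA⟩, ⟨rp, rq, rA⟩, hne, hpos, hle⟩ := unp u hu
    rw [mem_filter, mem_sfc hy]
    have k1 := coprime_of_lt_prime pp c0 (by exact_mod_cast cA.trans_lt pA)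
    have k2 := coprime_of_lt_prime rp c0 (by exact_mod_cast cA.trans_lt rA)
    have k3 := (Nat.coprime_primes pp rp).2 hne
    refine ⟨⟨hle, ?_, ?_⟩, hpos⟩
    · rw [Nat.squarefree_mul (Nat.Coprime.mul_left k2 k3), Nat.squarefree_mul k1]
      exact ⟨⟨csq, pp.prime.squarefree⟩, rp.prime.squarefree⟩
    · exact Nat.Coprime.mul_left (Nat.Coprime.mul_left ccop ((pp.coprime_iff_not_dvd).2 pq))
        ((rp.coprime_iff_not_dvd).2 rq)
  · intro n _
    rcases ((reps h q A y B).filter (fun u => u.1 * u.2.1 * u.2.2 = n)).eq_empty_or_nonempty with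
      h0 | ⟨u₀, hu₀⟩
    · rw [h0]; simp
    rw [mem_filter] at hu₀
    obtain ⟨⟨c0, cA, -, -⟩, ⟨pp, -, -⟩, ⟨rp, -, -⟩, -, -, -⟩ := unp u₀ hu₀.1
    have two : ∀ t : ℕ, t.Prime → A < t → t ∣ n → t ∈ ({u₀.2.1, u₀.2.2} : Finset ℕ) := by
      intro t ht hA' hd
      rw [← hu₀.2, ht.dvd_mul, ht.dvd_mul] at hd
      rw [mem_insert, mem_singleton]
      rcases hd with (hd | hd) | hd
      · have := Nat.le_of_dvd c0 hd
        have : (t : ℝ) ≤ u₀.1 := by exact_mod_cast this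
        linarith
      · exact Or.inl ((Nat.prime_dvd_prime_iff_eq ht pp).1 hd)
      · exact Or.inr ((Nat.prime_dvd_prime_iff_eq ht rp).1 hd)
    have hcard : (({u₀.2.1, u₀.2.2} : Finset ℕ) ×ˢ ({u₀.2.1, u₀.2.2} : Finset ℕ)).card ≤ 4 := by
      rw [card_product]
      have := card_le_two (a := u₀.2.1) (b := u₀.2.2)
      nlinarith
    refine le_trans (card_le_card_of_injOn (fun u => u.2) ?_ ?_) hcard
    · intro u hu
      rw [mem_coe, mem_filter] at hu
      obtain ⟨-, ⟨pp', -, pA'⟩, ⟨rp', -, rA'⟩, -⟩ := unp u hu.1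
      rw [mem_coe, mem_product]
      exact ⟨two _ pp' pA' (hu.2 ▸ (dvd_mul_left _ _).mul_right _),
        two _ rp' rA' (hu.2 ▸ Dvd.intro_left _ rfl)⟩
    · intro u hu v hv huv
      rw [mem_coe, mem_filter] at hu hv
      obtain ⟨-, ⟨pp', -, -⟩, ⟨rp', -, -⟩, -⟩ := unp u hu.1
      dsimp only at huv
      have e := hu.2.trans hv.2.symm
      rw [← huv, mul_assoc, mul_assoc] at e
      exact Prod.ext (Nat.eq_of_mul_eq_mul_right (Nat.mul_pos pp'.pos rp'.pos) e) huv

/-- Summing over the scales first bounds the total pair weight by the number of representations. -/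
lemma sum_pairSum_le (hr : Reg q X) (hXA : X ≤ A) (hy : A ^ 8 ≤ y) {B : Finset ℕ}
    (hB : ∀ a ∈ B, a ∈ sfc q A ∧ X ≤ (a : ℝ)) :
    ∑ c ∈ B, ∑ a ∈ B, ∑ b ∈ B, 1 / (a : ℝ) * (1 / (b : ℝ)) * pairSum h q y c a b ≤
      log y ^ 2 * ((∑ b ∈ B, 1 / (b : ℝ)) * (576 * dens q)) * (reps h q A y B).card := by
  have hA4 : 4 ≤ A := hr.large.trans hXA
  have hA1 : 1 ≤ A := by linarith
  have hy0 : 0 < y := lt_of_lt_of_le (by positivity) hy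
  have hL : 0 ≤ log y := log_nonneg ((one_le_pow₀ hA1).trans hy)
  have hd := dens_pos hr.q_ne
  set S := ∑ b ∈ B, 1 / (b : ℝ) with hS
  set P := bigPrm q A y with hP
  have bd : ∀ a ∈ B, 0 < a ∧ (a : ℝ) ≤ A := fun a ha =>
    ⟨pos_of_mem_sfc (hB a ha).1, ((mem_sfc (by linarith)).1 (hB a ha).1).1⟩
  set ind : ℕ → ℕ → ℕ → ℝ := fun c p r =>
    if p ≠ r ∧ 0 < h (c * p * r) ∧ ((c * p * r : ℕ) : ℝ) ≤ y then 1 else 0 with hind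
  have ind0 : ∀ c p r, 0 ≤ ind c p r := fun c p r => by rw [hind]; positivity
  have hcard : ((reps h q A y B).card : ℝ) = ∑ c ∈ B, ∑ p ∈ P, ∑ r ∈ P, ind c p r := by
    rw [reps, card_filter]
    push_cast
    rw [sum_product]
    refine sum_congr rfl fun c _ => ?_
    rw [sum_product]
    refine sum_congr rfl fun p _ => sum_congr rfl fun r _ => ?_
    simp only [hind, Nat.cast_mul]
  rw [hcard, mul_sum]
  refine sum_le_sum fun c hc => ?_
  have hc0 := bd c hc
  have hcr : (0 : ℝ) < c := by exact_mod_cast hc0.1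
  have step : ∀ a ∈ B, ∀ b ∈ B, pairSum h q y c a b ≤
      ∑ p ∈ P, if p ∈ prm q (rad y a b c) then log y ^ 2 * ∑ r ∈ P, ind c p r else 0 := by
    intro a ha b hb
    have ha0 := bd a ha
    have hb0 := bd b hb
    have l₁ := rad_lower hA1 hy ha0.1 hb0.1 hc0.1 hb0.2 hc0.2
    have l₂ := rad_lower hA1 hy hb0.1 ha0.1 hc0.1 ha0.2 hc0.2
    have mm := rad_mul hy0.le ha0.1 hb0.1 hc0.1
    have hA3 : 1 ≤ A ^ 3 := one_le_pow₀ hA1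
    have hprod : rad y a b c * rad y b a c ≤ y := by
      rw [mm]; exact div_le_self hy0.le (by exact_mod_cast hc0.1)
    have mp : ∀ p ∈ prm q (rad y a b c), p ∈ P := by
      intro p hp
      have k := lt_of_mem_prm hA4 l₁ hp
      rw [hP, mem_bigPrm hy0.le]
      refine ⟨k.2.1.trans ?_, k.2.2.1, k.2.2.2, k.1⟩
      nlinarith [rad_nonneg y a b c]
    have mr : ∀ p ∈ prm q (rad y b a c), p ∈ P := by
      intro p hp
      have k := lt_of_mem_prm hA4 l₂ hp
      rw [hP, mem_bigPrm hy0.le]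
      refine ⟨k.2.1.trans ?_, k.2.2.1, k.2.2.2, k.1⟩
      nlinarith [rad_nonneg y b a c]
    rw [← sum_filter, pairSum]
    refine le_trans (sum_le_sum fun p hp => ?_) (sum_le_sum_of_subset_of_nonneg
      (fun p hp => mem_filter.2 ⟨mp p hp, hp⟩) fun p _ _ =>
        mul_nonneg (sq_nonneg _) (sum_nonneg fun r _ => ind0 c p r))
    rw [mul_sum]
    refine le_trans (sum_le_sum fun r hr' => ?_) (sum_le_sum_of_subset_of_nonneg mr
      fun r _ _ => mul_nonneg (sq_nonneg _) (ind0 c p r))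
    have kp := (mem_bigPrm hy0.le).1 (mp p hp)
    have kr := (mem_bigPrm hy0.le).1 (mr r hr')
    have lp : log (p : ℝ) ≤ log y := log_le_log (by exact_mod_cast kp.2.1.pos) kp.1
    have lr : log (r : ℝ) ≤ log y := log_le_log (by exact_mod_cast kr.2.1.pos) kr.1
    have hcpr : ((c * p * r : ℕ) : ℝ) ≤ y := by
      push_cast
      have e1 := (lt_of_mem_prm hA4 l₁ hp).2.1
      have e2 := (lt_of_mem_prm hA4 l₂ hr').2.1
      calc (c : ℝ) * p * r = c * (p * r) := by ring
        _ ≤ c * (rad y a b c * rad y b a c) := by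
          have := rad_nonneg y a b c
          gcongr
        _ = y := by rw [mm]; field_simp
    have hif : pairInd h c p r = ind c p r := by
      simp only [pairInd, hind, hcpr, and_true]
    rw [hif]
    refine mul_le_mul_of_nonneg_right ?_ (ind0 c p r)
    rw [sq]
    exact mul_le_mul lp lr (log_natCast_nonneg r) hL
  calc ∑ a ∈ B, ∑ b ∈ B, 1 / (a : ℝ) * (1 / (b : ℝ)) * pairSum h q y c a b
      ≤ ∑ a ∈ B, ∑ b ∈ B, ∑ p ∈ P, (log y ^ 2 * ∑ r ∈ P, ind c p r) * ((1 / (b : ℝ)) *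
          (if p ∈ prm q (rad y a b c) then 1 / (a : ℝ) else 0)) := by
        refine sum_le_sum fun a ha => sum_le_sum fun b hb => ?_
        refine (mul_le_mul_of_nonneg_left (step a ha b hb) (by positivity)).trans (le_of_eq ?_)
        rw [mul_sum]
        refine sum_congr rfl fun p _ => ?_
        split_ifs <;> ring
    _ = ∑ p ∈ P, (log y ^ 2 * ∑ r ∈ P, ind c p r) * ∑ b ∈ B, (1 / (b : ℝ)) *
          ∑ a ∈ B, (if p ∈ prm q (rad y a b c) then 1 / (a : ℝ) else 0) := by
        rw [sum_comm]
        simp only [mul_sum]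
        rw [sum_congr rfl fun b _ => sum_comm, sum_comm]
    _ ≤ ∑ p ∈ P, (log y ^ 2 * ∑ r ∈ P, ind c p r) * ∑ b ∈ B, (1 / (b : ℝ)) *
          (576 * dens q) := by
        refine sum_le_sum fun p _ => ?_
        refine mul_le_mul_of_nonneg_left (sum_le_sum fun b hb => ?_)
          (mul_nonneg (sq_nonneg _) (sum_nonneg fun r _ => ind0 c p r))
        exact mul_le_mul_of_nonneg_left (inner_sum hr hy0 B hB (bd b hb).1 hc0.1) (by positivity)
    _ = log y ^ 2 * (S * (576 * dens q)) * ∑ p ∈ P, ∑ r ∈ P, ind c p r := by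
        rw [mul_sum]
        refine sum_congr rfl fun p _ => ?_
        rw [← sum_mul, ← hS]
        ring

/-- The lower bound for positive values, at a fixed regularity scale. -/
lemma pos_count (hm : IsMultFn h) (hne : ∀ p : ℕ, p.Prime → ¬ p ∣ q → h p ≠ 0)
    (hr : Reg q X) (hy : X ^ 1536 ≤ y) :
    dens q * y ≤ 2 * 10 ^ 10 * ((sfc q y).filter (fun n => 0 < h n)).card := by
  have hX0 : 0 < X := by linarith [hr.large]
  have hy0 : 0 < y := lt_of_lt_of_le (by positivity) hy
  -- `A = A₀ ^ 192` makes the mass `12 dens q log A₀` of the discarded `b ≤ A₀` half of the lower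
  -- bound `dens q log A / 8`, and `y = A ^ 8` keeps the prime scales above `A ^ 3`.
  obtain ⟨A₀, hXA₀, hA₀y⟩ : ∃ A₀ : ℝ, X ≤ A₀ ∧ A₀ ^ 1536 = y := by
    refine ⟨y ^ ((1536 : ℕ) : ℝ)⁻¹, ?_, rpow_inv_natCast_pow hy0.le (by norm_num)⟩
    rw [← pow_rpow_inv_natCast hX0.le (show 1536 ≠ 0 by norm_num)]
    exact rpow_le_rpow (by positivity) hy (by positivity)
  have hA₀1 : 1 ≤ A₀ := by linarith [hr.large]
  set A := A₀ ^ 192 with hA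
  have hAy : A ^ 8 = y := by rw [hA, ← pow_mul, ← hA₀y]
  have hA₀A : A₀ ≤ A := le_self_pow₀ hA₀1 (by norm_num)
  have hXA : X ≤ A := hXA₀.trans hA₀A
  have hA0 : 0 ≤ A := by positivity
  have hl0 : 1 ≤ log A₀ := hr.log_large.trans (log_le_log hX0 hXA₀)
  have hlA : log A = 192 * log A₀ := by rw [hA, log_pow]; norm_num
  have hly : log y = 1536 * log A₀ := by rw [← hA₀y, log_pow]; norm_num
  have hd := dens_pos hr.q_ne
  set B := ((sfc q A).filter (fun b => 0 < h b)).filter (fun b : ℕ => A₀ < b) with hBdef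
  set S := ∑ b ∈ B, 1 / (b : ℝ) with hS
  have hBm : ∀ b ∈ B, b ∈ sfc q A ∧ 0 < h b ∧ A₀ < b := by
    intro b hb
    simp only [hBdef, mem_filter] at hb
    exact ⟨hb.1.1, hb.1.2, hb.2⟩
  have hSlow : 12 * dens q * log A₀ ≤ S := by
    have h1 := pos_logSum_lower hm hne hr hXA (by rw [hlA]; linarith)
    have h2 := hr.logSum_le A₀ hXA₀
    rw [← sum_filter_add_sum_filter_not _ (fun b : ℕ => A₀ < b), ← hBdef, ← hS] at h1
    have h3 : ∑ b ∈ ((sfc q A).filter (fun b => 0 < h b)).filter (fun b : ℕ => ¬ A₀ < b),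
        1 / (b : ℝ) ≤ logSum q A₀ := by
      refine sum_le_sum_of_subset_of_nonneg ?_ fun _ _ _ => by positivity
      intro b hb
      simp only [mem_filter, not_lt, mem_sfc hA0] at hb
      rw [mem_sfc (by linarith)]
      exact ⟨hb.2, hb.1.1.2⟩
    rw [hlA] at h1
    linarith
  have hSpos : 0 < S := lt_of_lt_of_le (by positivity) hSlow
  have bd : ∀ b ∈ B, 0 < b ∧ (b : ℝ) ≤ A ∧ 0 < h b := fun b hb =>
    ⟨pos_of_mem_sfc (hBm b hb).1, ((mem_sfc hA0).1 (hBm b hb).1).1, (hBm b hb).2.1⟩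
  set V := ∑ c ∈ B, ∑ a ∈ B, ∑ b ∈ B, 1 / (a : ℝ) * (1 / (b : ℝ)) * pairSum h q y c a b with hV
  have hVup := sum_pairSum_le (h := h) hr hXA hAy.le (B := B)
    fun a ha => ⟨(hBm a ha).1, hXA₀.trans (hBm a ha).2.2.le⟩
  rw [← hV, ← hS] at hVup
  have hVlow : y / 128 * S ^ 3 ≤ 3 * V := by
    have h1 : y / 128 * S ^ 3 = ∑ a ∈ B, ∑ b ∈ B, ∑ c ∈ B,
        1 / (a : ℝ) * (1 / (b : ℝ)) * (1 / (c : ℝ)) * (y / 128) := by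
      simp only [← mul_sum, ← sum_mul, ← hS]
      ring
    have h2 : ∀ a ∈ B, ∀ b ∈ B, ∀ c ∈ B, 1 / (a : ℝ) * (1 / (b : ℝ)) * (1 / (c : ℝ)) * (y / 128) ≤
        1 / (a : ℝ) * (1 / (b : ℝ)) * pairSum h q y c a b +
        1 / (a : ℝ) * (1 / (c : ℝ)) * pairSum h q y b a c +
        1 / (b : ℝ) * (1 / (c : ℝ)) * pairSum h q y a b c := by
      intro a ha b hb c hc
      have k := triple_ineq hm hne hr hXA hAy.le (bd a ha) (bd b hb) (bd c hc)
      have a0 : (0 : ℝ) < a := by exact_mod_cast (bd a ha).1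
      have b0 : (0 : ℝ) < b := by exact_mod_cast (bd b hb).1
      have c0 : (0 : ℝ) < c := by exact_mod_cast (bd c hc).1
      refine (mul_le_mul_of_nonneg_left k (by positivity)).trans (le_of_eq ?_)
      field_simp
    rw [h1]
    refine (sum_le_sum fun a ha => sum_le_sum fun b hb => sum_le_sum fun c hc =>
      h2 a ha b hb c hc).trans (le_of_eq ?_)
    simp only [sum_add_distrib]
    have e1 : ∑ a ∈ B, ∑ b ∈ B, ∑ c ∈ B, 1 / (a : ℝ) * (1 / (b : ℝ)) * pairSum h q y c a b = V := by
      rw [hV, sum_congr rfl fun a _ => sum_comm, sum_comm]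
    have e2 : ∑ a ∈ B, ∑ b ∈ B, ∑ c ∈ B, 1 / (a : ℝ) * (1 / (c : ℝ)) * pairSum h q y b a c = V := by
      rw [hV, sum_comm]
    rw [e1, e2, ← hV]
    ring
  have hU := card_reps_le (h := h) (B := B) hy0.le (fun b hb => (hBm b hb).1) hA0
  set N := ((sfc q y).filter (fun n => 0 < h n)).card with hN
  have hU' : ((reps h q A y B).card : ℝ) ≤ 4 * N := by exact_mod_cast hU
  have k1 : y / 128 * S ^ 3 ≤ 3 * (log y ^ 2 * (S * (576 * dens q)) * (4 * N)) := by
    refine hVlow.trans (mul_le_mul_of_nonneg_left (hVup.trans ?_) (by norm_num))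
    gcongr
  have k2 : y * S ^ 2 ≤ 884736 * log y ^ 2 * dens q * N := by
    refine le_of_mul_le_mul_left ?_ hSpos
    linarith
  have k3 : y * (12 * dens q * log A₀) ^ 2 ≤ 884736 * log y ^ 2 * dens q * N :=
    le_trans (by gcongr) k2
  rw [hly] at k3
  have hp : 0 < 144 * dens q * log A₀ ^ 2 := by positivity
  refine le_of_mul_le_mul_left ?_ hp
  have hN0 : (0 : ℝ) ≤ N := Nat.cast_nonneg _
  have hfin : 0 ≤ dens q * log A₀ ^ 2 * N := by positivity
  nlinarith

end Core2

end MultSigns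

/-! ### Counting negative values -/

namespace MultSigns

open Finset Real Filter

/-- The constant in the lower bound for positive values. -/
def posConst : ℝ := 2 * 10 ^ 10

lemma posConst_ge : 1 ≤ posConst := by norm_num [posConst]

lemma pos_count_large (ε : ℝ) (hε : 0 < ε) :
    ∃ q₀ : ℕ, ∀ q : ℕ, q₀ ≤ q → ∀ y : ℝ, (q : ℝ) ^ ε ≤ y → ∀ h : ℕ → ℝ, IsMultFn h →
      (∀ p : ℕ, p.Prime → ¬ p ∣ q → h p ≠ 0) →
      dens q * y ≤ posConst * ((sfc q y).filter (fun n => 0 < h n)).card := by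
  obtain ⟨q₀, h₀⟩ := exists_reg (ε / 1536) (by positivity)
  refine ⟨q₀, fun q hq y hy h hm hne => pos_count hm hne (h₀ q hq) ?_⟩
  rw [← rpow_natCast, ← rpow_mul (Nat.cast_nonneg q)]
  convert hy using 2
  push_cast
  ring

lemma dens_mul_prime {q p : ℕ} (hp : p.Prime) (hpq : ¬ p ∣ q) :
    dens (q * p) = dens q * (1 - 1 / (p : ℝ)) := by
  have hc : Nat.Coprime q p := ((hp.coprime_iff_not_dvd).2 hpq).symm
  have hp0 : (p : ℝ) ≠ 0 := by exact_mod_cast hp.ne_zero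
  rw [dens, dens, Nat.totient_mul hc, Nat.totient_prime hp, Nat.cast_mul, Nat.cast_mul,
    Nat.cast_sub hp.one_lt.le]
  rcases eq_or_ne (q : ℝ) 0 with h0 | h0
  · rw [h0]; simp
  · field_simp
    norm_num

/-- The lower bound for positive values survives the extra condition `p ∤ n`. For `p ≤ q` the
modulus is replaced by `q p`; for `p > q` the multiples of `p` are too sparse to matter. -/
lemma pos_count_not_dvd (ε : ℝ) (hε : 0 < ε) :
    ∃ q₀ : ℕ, ∀ q : ℕ, q₀ ≤ q → ∀ z : ℝ, (q : ℝ) ^ ε ≤ z → ∀ h : ℕ → ℝ, IsMultFn h →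
      (∀ p : ℕ, p.Prime → ¬ p ∣ q → h p ≠ 0) → ∀ p : ℕ, p.Prime → ¬ p ∣ q →
      dens q * z ≤ 2 * posConst * ((sfc q z).filter (fun n => 0 < h n ∧ ¬ p ∣ n)).card := by
  obtain ⟨q₁, h₁⟩ := pos_count_large ε hε
  obtain ⟨q₂, h₂⟩ := pos_count_large (ε / 2) (by positivity)
  have hM := posConst_ge
  obtain ⟨q₃, h₃⟩ := two_pow_omega_le 1 (1 / (4 * posConst)) one_pos (by positivity)
  refine ⟨max (max q₁ q₂) (max q₃ 1), fun q hq z hz h hm hne p hp hpq => ?_⟩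
  simp only [max_le_iff] at hq
  have hq1 : (1 : ℝ) ≤ q := by exact_mod_cast hq.2.2
  have hq0 : q ≠ 0 := by omega
  have hd := dens_pos hq0
  have hz0 : 0 < z := lt_of_lt_of_le (by positivity) hz
  have hp2 : (2 : ℝ) ≤ p := by exact_mod_cast hp.two_le
  rcases le_or_gt p q with hle | hlt
  · have k := h₂ (q * p) (hq.1.2.trans (Nat.le_mul_of_pos_right q hp.pos)) z ?_ h hm
      (fun r hr hrq => hne r hr fun hd => hrq (hd.mul_right p))
    · rw [dens_mul_prime hp hpq] at k
      have hsub : (sfc (q * p) z).filter (fun n => 0 < h n) ⊆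
          (sfc q z).filter (fun n => 0 < h n ∧ ¬ p ∣ n) := by
        intro n hn
        simp only [mem_filter, mem_sfc hz0.le, Nat.coprime_mul_iff_right] at hn ⊢
        refine ⟨⟨hn.1.1, hn.1.2.1, hn.1.2.2.1⟩, hn.2, ?_⟩
        exact (hp.coprime_iff_not_dvd).1 hn.1.2.2.2.symm
      have hc : (((sfc (q * p) z).filter (fun n => 0 < h n)).card : ℝ) ≤
          ((sfc q z).filter (fun n => 0 < h n ∧ ¬ p ∣ n)).card := by
        exact_mod_cast card_le_card hsub
      have k2 := k.trans (mul_le_mul_of_nonneg_left hc (by linarith))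
      have hp' : 1 / (p : ℝ) ≤ 1 / 2 := by gcongr
      have : dens q * z * (1 / 2) ≤ dens q * z * (1 - 1 / p) := by
        gcongr; linarith
      linarith
    · refine le_trans ?_ hz
      have : ((q * p : ℕ) : ℝ) ≤ (q : ℝ) ^ (2 : ℝ) := by
        rw [rpow_two, sq]
        push_cast
        gcongr
      refine (rpow_le_rpow (by positivity) this (by positivity)).trans (le_of_eq ?_)
      rw [← rpow_mul (by positivity)]
      congr 1
      ring
  · have k := h₁ q hq.1.1 z hz h hm hne
    have hsplit := card_filter_add_card_filter_not (s := (sfc q z).filter (fun n => 0 < h n))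
      (fun n => ¬ p ∣ n)
    rw [filter_filter] at hsplit
    have hmul : ((((sfc q z).filter (fun n => 0 < h n)).filter
        (fun n => ¬ ¬ p ∣ n)).card : ℝ) ≤ z / p := by
      have hsub : ((sfc q z).filter (fun n => 0 < h n)).filter (fun n => ¬ ¬ p ∣ n) ⊆
          (Ioc 0 ⌊z⌋₊).filter (fun n => p ∣ n) := by
        intro n hn
        simp only [mem_filter, not_not] at hn
        rw [mem_filter, mem_Ioc, Nat.le_floor_iff hz0.le]
        exact ⟨⟨pos_of_mem_sfc hn.1.1, ((mem_sfc hz0.le).1 hn.1.1).1⟩, hn.2⟩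
      have := card_le_card hsub
      rw [Nat.Ioc_filter_dvd_card_eq_div, ← Nat.floor_div_natCast] at this
      exact le_trans (by exact_mod_cast this) (Nat.floor_le (by positivity))
    have hdens : 2 * posConst ≤ q * dens q := by
      have e1 := (sfDivSum_mul_dens hq0).1
      have e2 : sfDivSum q ≤ 2 ^ q.primeFactors.card := by
        rw [← card_sqfree_divisors hq0, sfDivSum, ← nsmul_one, ← sum_const]
        refine sum_le_sum fun d hd => ?_
        have : (1 : ℝ) ≤ d := by
          exact_mod_cast Nat.pos_of_mem_divisors (mem_filter.1 hd).1
        exact (div_le_one (by linarith)).2 this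
      have e3 := h₃ q hq.2.1
      rw [rpow_one] at e3
      have e4 : 1 / 2 ≤ 1 / (4 * posConst) * q * dens q :=
        e1.trans (mul_le_mul_of_nonneg_right (e2.trans e3) hd.le)
      have e5 : 1 / (4 * posConst) * q * dens q = q * dens q / (4 * posConst) := by ring
      rw [e5, le_div_iff₀ (by positivity)] at e4
      linarith
    have hzp : z / p ≤ z / q := by
      have : (q : ℝ) ≤ p := by exact_mod_cast hlt.le
      gcongr
    have hzq : 2 * posConst * (z / q) ≤ dens q * z := by
      rw [← mul_div_assoc, div_le_iff₀ (by positivity)]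
      nlinarith
    have hs : (((sfc q z).filter (fun n => 0 < h n)).card : ℝ) =
        ((sfc q z).filter (fun n => 0 < h n ∧ ¬ p ∣ n)).card +
        (((sfc q z).filter (fun n => 0 < h n)).filter (fun n => ¬ ¬ p ∣ n)).card := by
      exact_mod_cast hsplit.symm
    rw [hs] at k
    have := mul_le_mul_of_nonneg_left (hmul.trans hzp) (show 0 ≤ posConst by linarith)
    linarith

/-- The number of primes in `T` dividing `n`. -/
def hits (T : Finset ℕ) (n : ℕ) : ℝ := ∑ p ∈ T, if p ∣ n then 1 else 0

section Neg

variable {h : ℕ → ℝ} {q : ℕ} {X y : ℝ} {T : Finset ℕ}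

lemma hits_eq_card (T : Finset ℕ) (n : ℕ) : hits T n = (T.filter (fun p => p ∣ n)).card := by
  rw [hits, card_filter]
  push_cast
  rfl

/-- First moment: each `p ∈ T` divides at least as many `n ≤ y` with `h n < 0` as there are `k ≤ y / p` prime
to `p` with `h k > 0`. -/
lemma first_moment (hm : IsMultFn h) (hy : 0 ≤ y)
    (hT : ∀ p ∈ T, p.Prime ∧ ¬ p ∣ q ∧ h p < 0) {C : ℝ} (hC : 0 ≤ C)
    (hK : ∀ p ∈ T, dens q * (y / p) ≤
      C * ((sfc q (y / p)).filter (fun n => 0 < h n ∧ ¬ p ∣ n)).card) :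
    dens q * y * ∑ p ∈ T, 1 / (p : ℝ) ≤
      C * ∑ n ∈ (sfc q y).filter (fun n => h n < 0), hits T n := by
  simp only [hits]
  rw [sum_comm, mul_sum, mul_sum]
  refine sum_le_sum fun p hp => ?_
  obtain ⟨pp, pq, hneg⟩ := hT p hp
  have p0 : (0 : ℝ) < p := by exact_mod_cast pp.pos
  have e : dens q * y * (1 / p) = dens q * (y / p) := by ring
  rw [e]
  refine (hK p hp).trans (mul_le_mul_of_nonneg_left ?_ hC)
  rw [← sum_filter, sum_const, nsmul_one, Nat.cast_le]
  refine card_le_card_of_injOn (fun k => p * k) ?_ ?_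
  · intro k hk
    simp only [coe_filter, Set.mem_ofPred_eq, mem_filter, mem_sfc hy,
      mem_sfc (show 0 ≤ y / p by positivity)] at hk ⊢
    obtain ⟨⟨k1, k2, k3⟩, k4, k5⟩ := hk
    have hc := (pp.coprime_iff_not_dvd).2 k5
    refine ⟨⟨⟨?_, ?_, ?_⟩, ?_⟩, dvd_mul_right _ _⟩
    · rw [le_div_iff₀ p0] at k1
      push_cast
      linarith
    · rw [Nat.squarefree_mul hc]
      exact ⟨pp.prime.squarefree, k2⟩
    · exact Nat.Coprime.mul_left ((pp.coprime_iff_not_dvd).2 pq) k3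
    · rw [hm.2 _ _ hc]
      exact mul_neg_of_neg_of_pos hneg k4
  · intro a _ b _ hab
    exact Nat.eq_of_mul_eq_mul_left pp.pos hab

lemma card_multiples_le (hr : Reg q X) (hy : 0 ≤ y) {m : ℕ} (hm : 0 < m) (hX : X ≤ y / m) :
    (((sfc q y).filter (fun n => m ∣ n)).card : ℝ) ≤ 36 * dens q * (y / m) := by
  have m0 : (0 : ℝ) < m := by exact_mod_cast hm
  refine le_trans ?_ (hr.card_le _ hX)
  rw [Nat.cast_le]
  refine card_le_card_of_injOn (fun n => n / m) ?_ ?_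
  · intro n hn
    simp only [coe_filter, Set.mem_ofPred_eq, mem_sfc hy] at hn
    rw [mem_coe, mem_sfc (by positivity)]
    obtain ⟨⟨h1, h2, h3⟩, k, rfl⟩ := hn
    dsimp only
    rw [Nat.mul_div_cancel_left _ hm]
    refine ⟨?_, h2.squarefree_of_dvd (dvd_mul_left _ _), Nat.Coprime.coprime_mul_left h3⟩
    rw [le_div_iff₀ m0]
    push_cast at h1
    linarith
  · intro a ha b hb hab
    rw [mem_coe, mem_filter] at ha hb
    exact (Nat.div_left_inj ha.2 hb.2).1 hab

/-- Second moment, by counting the multiples of `p` and of `p r` among the integers of `sfc q y`. -/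
lemma second_moment (hr : Reg q X) (hy : 0 ≤ y) (hT : ∀ p ∈ T, p.Prime)
    (hX : ∀ p ∈ T, ∀ r ∈ T, X * (p * r) ≤ y) (N : Finset ℕ) (hN : N ⊆ sfc q y) :
    ∑ n ∈ N, hits T n ^ 2 ≤ 36 * dens q * y *
      (∑ p ∈ T, 1 / (p : ℝ) + (∑ p ∈ T, 1 / (p : ℝ)) ^ 2) := by
  have hd := dens_pos hr.q_ne
  have hX0 : 0 < X := by linarith [hr.large]
  have e1 : ∀ n, hits T n ^ 2 = ∑ p ∈ T, ∑ r ∈ T, if p ∣ n ∧ r ∣ n then (1 : ℝ) else 0 := by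
    intro n
    rw [sq, hits, sum_mul_sum]
    refine sum_congr rfl fun p _ => sum_congr rfl fun r _ => ?_
    by_cases h1 : p ∣ n <;> by_cases h2 : r ∣ n <;> simp [h1, h2]
  have e2 : ∑ n ∈ N, hits T n ^ 2 = ∑ p ∈ T, ∑ r ∈ T,
      ((N.filter (fun n => p ∣ n ∧ r ∣ n)).card : ℝ) := by
    rw [sum_congr rfl fun n _ => e1 n, sum_comm]
    refine sum_congr rfl fun p _ => ?_
    rw [sum_comm]
    refine sum_congr rfl fun r _ => ?_
    rw [← sum_filter, sum_const, nsmul_one]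
  have e3 : ∀ p ∈ T, ∀ r ∈ T, ((N.filter (fun n => p ∣ n ∧ r ∣ n)).card : ℝ) ≤
      (if p = r then 36 * dens q * y * (1 / p) else 0) +
        36 * dens q * y * (1 / (p : ℝ) * (1 / (r : ℝ))) := by
    intro p hp r hr'
    have pp := hT p hp
    have rp := hT r hr'
    have p1 : (1 : ℝ) ≤ p := by exact_mod_cast pp.pos
    have r1 : (1 : ℝ) ≤ r := by exact_mod_cast rp.pos
    have hx := hX p hp r hr'
    have hmono : ∀ m : ℕ, (∀ n, p ∣ n ∧ r ∣ n → m ∣ n) →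
        ((N.filter (fun n => p ∣ n ∧ r ∣ n)).card : ℝ) ≤
          ((sfc q y).filter (fun n => m ∣ n)).card := by
      intro m hmm
      rw [Nat.cast_le]
      refine card_le_card fun n hn => ?_
      rw [mem_filter] at hn ⊢
      exact ⟨hN hn.1, hmm n hn.2⟩
    split_ifs with hpr
    · refine (hmono p fun n hn => hn.1).trans ((card_multiples_le hr hy pp.pos ?_).trans ?_)
      · rw [le_div_iff₀ (by linarith)]
        refine le_trans ?_ hx
        gcongr
        exact le_mul_of_one_le_right (by linarith) r1
      · have : 0 ≤ 36 * dens q * y * (1 / (p : ℝ) * (1 / (r : ℝ))) := by positivity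
        have e : 36 * dens q * (y / p) = 36 * dens q * y * (1 / p) := by ring
        linarith
    · have hc := (Nat.coprime_primes pp rp).2 hpr
      refine (hmono (p * r) fun n hn => hc.mul_dvd_of_dvd_of_dvd hn.1 hn.2).trans
        ((card_multiples_le hr hy (Nat.mul_pos pp.pos rp.pos) ?_).trans (le_of_eq ?_))
      · push_cast
        rw [le_div_iff₀ (by positivity)]
        exact hx
      · push_cast
        field_simp
        ring
  rw [e2]
  refine (sum_le_sum fun p hp => sum_le_sum fun r hr' => e3 p hp r hr').trans (le_of_eq ?_)
  simp only [sum_add_distrib, sum_ite_eq]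
  rw [sum_congr rfl fun p hp => if_pos hp, ← mul_sum, sq, sum_mul_sum]
  simp only [← mul_sum]
  ring

/-- Cauchy–Schwarz turns the two moments into a lower bound for the number of negative values. -/
lemma neg_small (hm : IsMultFn h) (hr : Reg q X) (hy : 0 < y)
    (hT : ∀ p ∈ T, p.Prime ∧ ¬ p ∣ q ∧ h p < 0) {C : ℝ} (hC : 0 ≤ C)
    (hK : ∀ p ∈ T, dens q * (y / p) ≤
      C * ((sfc q (y / p)).filter (fun n => 0 < h n ∧ ¬ p ∣ n)).card)
    (hX : ∀ p ∈ T, ∀ r ∈ T, X * (p * r) ≤ y) :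
    dens q * y * min 1 (∑ p ∈ T, 1 / (p : ℝ)) ≤
      72 * C ^ 2 * ((sfc q y).filter (fun n => h n < 0)).card := by
  have hd := dens_pos hr.q_ne
  set S := ∑ p ∈ T, 1 / (p : ℝ) with hS
  set N := (sfc q y).filter (fun n => h n < 0) with hN
  have m1 := first_moment hm hy.le hT hC hK
  have m2 := second_moment hr hy.le (fun p hp => (hT p hp).1) hX N (filter_subset _ _)
  rw [← hS] at m1 m2
  rw [← hN] at m1
  have hS0 : 0 ≤ S := sum_nonneg fun _ _ => by positivity
  rcases hS0.eq_or_lt with h0 | hpos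
  · rw [← h0, min_eq_right zero_le_one, mul_zero]
    positivity
  have cs : (∑ n ∈ N, hits T n) ^ 2 ≤ N.card * ∑ n ∈ N, hits T n ^ 2 := sq_sum_le_card_mul_sum_sq
  have k1 : (dens q * y * S) ^ 2 ≤ C ^ 2 * (N.card * (36 * dens q * y * (S + S ^ 2))) := by
    calc (dens q * y * S) ^ 2 ≤ (C * ∑ n ∈ N, hits T n) ^ 2 :=
          pow_le_pow_left₀ (by positivity) m1 2
      _ = C ^ 2 * (∑ n ∈ N, hits T n) ^ 2 := by ring
      _ ≤ _ := by
        refine mul_le_mul_of_nonneg_left (cs.trans ?_) (sq_nonneg C)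
        exact mul_le_mul_of_nonneg_left m2 (Nat.cast_nonneg _)
  have k2 : dens q * y * S ≤ 36 * C ^ 2 * N.card * (1 + S) := by
    have : 0 < dens q * y * S := by positivity
    refine le_of_mul_le_mul_left ?_ this
    linarith
  have k3 : min 1 S * (1 + S) ≤ 2 * S := by
    rcases le_total 1 S with h1 | h1
    · rw [min_eq_left h1]; linarith
    · rw [min_eq_right h1]; nlinarith
  have h1S : 0 < 1 + S := by linarith
  refine le_of_mul_le_mul_right ?_ h1S
  have := mul_le_mul_of_nonneg_left k3 (show 0 ≤ dens q * y by positivity)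
  linarith

/-- For primes of size at least `w` the first moment suffices, since an integer `n ≤ w ^ 4` has at
most four such prime factors. -/
lemma neg_large (hm : IsMultFn h) {w : ℝ} (hw : 1 < w)
    (hT : ∀ p ∈ T, p.Prime ∧ ¬ p ∣ q ∧ h p < 0) {C : ℝ} (hC : 0 ≤ C)
    (hK : ∀ p ∈ T, dens q * (w ^ 4 / p) ≤
      C * ((sfc q (w ^ 4 / p)).filter (fun n => 0 < h n ∧ ¬ p ∣ n)).card)
    (hbig : ∀ p ∈ T, w ≤ (p : ℝ)) :
    dens q * w ^ 4 * ∑ p ∈ T, 1 / (p : ℝ) ≤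
      4 * C * ((sfc q (w ^ 4)).filter (fun n => h n < 0)).card := by
  have hy : 0 ≤ w ^ 4 := by positivity
  refine (first_moment hm hy hT hC hK).trans ?_
  have : ∑ n ∈ (sfc q (w ^ 4)).filter (fun n => h n < 0), hits T n ≤
      ∑ n ∈ (sfc q (w ^ 4)).filter (fun n => h n < 0), (4 : ℝ) := by
    refine sum_le_sum fun n hn => ?_
    have hn' := (mem_filter.1 hn).1
    have hn0 := pos_of_mem_sfc hn'
    rw [mem_sfc hy] at hn'
    rw [hits_eq_card]
    set F := T.filter (fun p => p ∣ n) with hF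
    have hdvd : ∏ p ∈ F, p ∣ n :=
      prod_primes_dvd n (fun p hp => (hT p (mem_filter.1 hp).1).1.prime)
        fun p hp => (mem_filter.1 hp).2
    have h1 : w ^ F.card ≤ ((∏ p ∈ F, p : ℕ) : ℝ) := by
      rw [Nat.cast_prod, ← prod_const]
      exact prod_le_prod (fun _ _ => by linarith) fun p hp => hbig p (mem_filter.1 hp).1
    have h2 : ((∏ p ∈ F, p : ℕ) : ℝ) ≤ n := by exact_mod_cast Nat.le_of_dvd hn0 hdvd
    have h3 := (pow_le_pow_iff_right₀ hw).1 (h1.trans (h2.trans hn'.1))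
    exact_mod_cast h3
  rw [sum_const, nsmul_eq_mul] at this
  have := mul_le_mul_of_nonneg_left this hC
  linarith

end Neg

/-- The primes of `T` are split at `w = y ^ (1/4)`, so that `p r X ≤ y` for primes `p, r < w`. -/
lemma neg_count_large (ε : ℝ) (hε : 0 < ε) :
    ∃ q₀ : ℕ, ∀ q : ℕ, q₀ ≤ q → ∀ y : ℝ, (q : ℝ) ^ (ε / 2) ≤ y → ∀ h : ℕ → ℝ, IsMultFn h →
      (∀ p : ℕ, p.Prime → ¬ p ∣ q → h p ≠ 0) → ∀ T : Finset ℕ,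
      (∀ p ∈ T, p.Prime ∧ ¬ p ∣ q ∧ h p < 0 ∧ (p : ℝ) ≤ y / (q : ℝ) ^ (ε / 8)) →
      dens q * y * min 1 (∑ p ∈ T, 1 / (p : ℝ)) ≤
        300 * posConst ^ 2 * ((sfc q y).filter (fun n => h n < 0)).card := by
  obtain ⟨q₁, h₁⟩ := exists_reg (ε / 4) (by positivity)
  obtain ⟨q₂, h₂⟩ := pos_count_not_dvd (ε / 8) (by positivity)
  refine ⟨max q₁ q₂, fun q hq y hy h hm hne T hT => ?_⟩
  simp only [max_le_iff] at hq
  have hr := h₁ q hq.1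
  have hM := posConst_ge
  have hd := dens_pos hr.q_ne
  have hq0 : (0 : ℝ) < q := by exact_mod_cast Nat.pos_of_ne_zero hr.q_ne
  set X := (q : ℝ) ^ (ε / 4) with hX
  have hX4 := hr.large
  have hXy : X ^ 2 ≤ y := by
    refine le_trans (le_of_eq ?_) hy
    rw [hX, ← rpow_natCast, ← rpow_mul hq0.le]
    congr 1
    push_cast
    ring
  have hy0 : 0 < y := lt_of_lt_of_le (by positivity) hXy
  obtain ⟨w, hw0, hwy⟩ : ∃ w : ℝ, 0 ≤ w ∧ w ^ 4 = y :=
    ⟨y ^ ((4 : ℕ) : ℝ)⁻¹, by positivity, rpow_inv_natCast_pow hy0.le (by norm_num)⟩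
  have hXw : X ≤ w ^ 2 := by
    refine (sq_le_sq₀ (by positivity) (by positivity)).1 ?_
    rw [← pow_mul]
    exact hXy.trans hwy.ge
  have hw1 : 1 < w := by nlinarith
  have hT' : ∀ p ∈ T, p.Prime ∧ ¬ p ∣ q ∧ h p < 0 := fun p hp =>
    ⟨(hT p hp).1, (hT p hp).2.1, (hT p hp).2.2.1⟩
  have hK : ∀ p ∈ T, dens q * (y / p) ≤ 2 * posConst *
      ((sfc q (y / p)).filter (fun n => 0 < h n ∧ ¬ p ∣ n)).card := by
    intro p hp
    have hp' := hT p hp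
    have p0 : (0 : ℝ) < p := by exact_mod_cast hp'.1.pos
    refine h₂ q hq.2 _ ?_ h hm hne p hp'.1 hp'.2.1
    have := hp'.2.2.2
    rw [le_div_iff₀ (by positivity)] at this
    rw [le_div_iff₀ p0]
    linarith
  have s₁ := neg_small (T := T.filter (fun p : ℕ => (p : ℝ) < w)) hm hr hy0
    (fun p hp => hT' p (mem_filter.1 hp).1) (by linarith) (fun p hp => hK p (mem_filter.1 hp).1)
    (fun p hp r hr' => by
      have a := (mem_filter.1 hp).2.le
      have b := (mem_filter.1 hr').2.le
      calc X * (p * r) ≤ w ^ 2 * (w * w) := by gcongr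
        _ = y := by rw [← hwy]; ring)
  have s₂ := neg_large (q := q) (h := h) (T := T.filter (fun p : ℕ => ¬ (p : ℝ) < w)) hm hw1
    (fun p hp => hT' p (mem_filter.1 hp).1) (C := 2 * posConst) (by linarith)
    (fun p hp => by rw [hwy]; exact hK p (mem_filter.1 hp).1)
    (fun p hp => not_lt.1 (mem_filter.1 hp).2)
  rw [hwy] at s₂
  rw [← sum_filter_add_sum_filter_not T (fun p : ℕ => (p : ℝ) < w)]
  set S₁ := ∑ p ∈ T.filter (fun p : ℕ => (p : ℝ) < w), 1 / (p : ℝ)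
  set S₂ := ∑ p ∈ T.filter (fun p : ℕ => ¬ (p : ℝ) < w), 1 / (p : ℝ) with hS₂
  set N : ℝ := (((sfc q y).filter (fun n => h n < 0)).card : ℝ) with hN
  have hS₂0 : 0 ≤ S₂ := sum_nonneg fun _ _ => by positivity
  have hmin : min 1 (S₁ + S₂) ≤ min 1 S₁ + S₂ := by
    rcases le_total 1 S₁ with h1 | h1
    · rw [min_eq_left h1]; linarith [min_le_left 1 (S₁ + S₂)]
    · rw [min_eq_right h1]; exact min_le_right _ _
  have k := mul_le_mul_of_nonneg_left hmin (show 0 ≤ dens q * y by positivity)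
  have hN0 : 0 ≤ N := Nat.cast_nonneg _
  have hMN : posConst * N ≤ posConst ^ 2 * N := by
    gcongr
    nlinarith
  nlinarith

end MultSigns

/-! ### The theorem -/

/-- **Signs of multiplicative functions at squarefree integers.** There is an absolute `c₀ > 0`
such that for every `ε > 0`, all sufficiently large `q`, every `y ≥ q^(ε/2)` and every
multiplicative `h₀` with `h₀ p ≠ 0` for primes `p ∤ q`, the number of squarefree `n ≤ y`
coprime to `q` with `h₀ n > 0` is at least `c₀ (φ(q)/q) y`, and the number with `h₀ n < 0`
is at least `c₀ (φ(q)/q) y · min{1, ∑_{p ≤ y/q^(ε/8), p ∤ q, h₀(p) < 0} 1/p}`. -/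
theorem mult_function_signs :
    ∃ c₀ : ℝ, 0 < c₀ ∧
      ∀ ε : ℝ, 0 < ε →
        ∃ q₀ : ℕ,
          ∀ q : ℕ, q₀ ≤ q →
            ∀ y : ℝ, (q : ℝ) ^ (ε / 2) ≤ y →
              ∀ h₀ : ℕ → ℝ, IsMultFn h₀ →
                (∀ p : ℕ, p.Prime → ¬ p ∣ q → h₀ p ≠ 0) →
                c₀ * ((Nat.totient q : ℝ) / (q : ℝ)) * y ≤
                    (((Finset.range (⌊y⌋₊ + 1)).filter
                      (fun n : ℕ => Squarefree n ∧ Nat.Coprime n q ∧ 0 < h₀ n)).card : ℝ) ∧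
                c₀ * ((Nat.totient q : ℝ) / (q : ℝ)) * y *
                    min 1 (∑ p ∈ (Finset.range (⌊y⌋₊ + 1)).filter
                        (fun p : ℕ => p.Prime ∧ (p : ℝ) ≤ y / (q : ℝ) ^ (ε / 8) ∧
                          ¬ p ∣ q ∧ h₀ p < 0),
                      (1 : ℝ) / (p : ℝ)) ≤
                    (((Finset.range (⌊y⌋₊ + 1)).filter
                      (fun n : ℕ => Squarefree n ∧ Nat.Coprime n q ∧ h₀ n < 0)).card : ℝ) := by
  refine ⟨1 / (300 * MultSigns.posConst ^ 2), ?_, fun ε hε => ?_⟩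
  · have := MultSigns.posConst_ge
    positivity
  obtain ⟨q₁, h₁⟩ := MultSigns.pos_count_large (ε / 2) (by positivity)
  obtain ⟨q₂, h₂⟩ := MultSigns.neg_count_large ε hε
  refine ⟨max (max q₁ q₂) 1, fun q hq y hy h hm hne => ?_⟩
  simp only [max_le_iff] at hq
  have hM := MultSigns.posConst_ge
  have hq0 : (0 : ℝ) < q := by exact_mod_cast hq.2
  have hy0 : 0 < y := lt_of_lt_of_le (by positivity) hy
  have hpos := h₁ q hq.1.1 y hy h hm hne
  have hneg := h₂ q hq.1.2 y hy h hm hne ((Finset.range (⌊y⌋₊ + 1)).filter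
    (fun p : ℕ => p.Prime ∧ (p : ℝ) ≤ y / (q : ℝ) ^ (ε / 8) ∧ ¬ p ∣ q ∧ h p < 0))
    (fun p hp => by
      obtain ⟨-, a, b, c, d⟩ := Finset.mem_filter.1 hp
      exact ⟨a, c, d, b⟩)
  rw [MultSigns.sfc, Finset.filter_filter, MultSigns.dens] at hpos hneg
  simp only [and_assoc] at hpos hneg
  constructor
  · have hC : MultSigns.posConst ≤ 300 * MultSigns.posConst ^ 2 := by nlinarith
    have := hpos.trans (mul_le_mul_of_nonneg_right hC (Nat.cast_nonneg _))
    rw [mul_assoc, one_div_mul_eq_div, div_le_iff₀ (by positivity)]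
    linarith
  · rw [mul_assoc, mul_assoc, one_div_mul_eq_div, div_le_iff₀ (by positivity)]
    linarith
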